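/- arXiv:1706.06945 — 3 statements merged into one kernel-verified Lean document; each statement's English description precedes it below -/
import Mathlib

section
/- For every c ∈ (0,1] and α > 0 there exists n₀ such that for all n ≥ n₀: every ⌈cn⌉-regular graph G on n vertices contains at most ⌊1/c⌋ vertex-disjoint paths whose union covers all but at most αn vertices of G. -/
open Finset

/-- A nonempty list of vertices forms a path in `G`: consecutive vertices adjacent,
no repeats. Lists of length 1 are paths of length 0 (single vertices). -/
def IsPathList {V : Type*} (G : SimpleGraph V) (l : List V) : Prop :=
  l ≠ [] ∧ l.Chain' G.Adj ∧ l.Nodup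

/-!
Szemerédi's lemma splits `V` into clusters joined by a reduced graph `R` of dense regular pairs, and
all but few edges of `G` lie over `R`. A component of `R` whose clusters hold at most `n / (k + 1)`
vertices, where `k = ⌊1/c⌋`, forces each of its vertices to lose a positive fraction of its
`d ≥ cn > n / (k + 1)` edges, so such components hold few vertices, and at most `k` components
remain.

In a remaining component, giving the pair `ij` the weight `e(Vᵢ, Vⱼ) / d` is by regularity an almost
perfect fractional matching. A walk in `R` that traverses each edge `ij` about `e(Vᵢ, Vⱼ) / d` times
(back and forth, before moving on to the next edge) thus visits each cluster a little less than
`#Vᵢ` times, and lower regularity lifts it to a path of `G` covering almost all of the component.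
-/

universe u

variable {V ι : Type*}

section Walks

variable {R : SimpleGraph ι} [DecidableEq ι]

lemma exists_walk_alternating {a b : ι} (h : R.Adj a b) (m : ℕ) :
    ∃ w : R.Walk a a, w.length = 2 * m ∧
      ∀ i, w.support.count i ≤ m * [a, b].count i + 1 := by
  induction m with
  | zero => exact ⟨.nil, rfl, fun i ↦ by simpa using List.count_le_length (l := [a])⟩
  | succ m ih =>
    obtain ⟨w, hlength, hcount⟩ := ih
    refine ⟨.cons h (.cons h.symm w), by simp [hlength, mul_add], fun i ↦ ?_⟩
    have := hcount i
    simp only [SimpleGraph.Walk.support_cons, List.count_cons, List.count_nil] at this ⊢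
    linarith

-- Alternate along each pair of `E` in turn, moving to the next pair along a simple path.
lemma exists_walk_traversing (x : ι × ι → ℕ) (u : ι) (E : Finset (ι × ι))
    (hE : ∀ e ∈ E, R.Adj e.1 e.2 ∧ R.Reachable u e.1) :
    ∃ v, ∃ w : R.Walk u v, 2 * ∑ e ∈ E, x e ≤ w.length ∧
      ∀ i, w.support.count i ≤ ∑ e ∈ E, x e * [e.1, e.2].count i + 2 * #E + 1 := by
  induction E using Finset.induction_on with
  | empty => exact ⟨u, .nil, by simp, fun i ↦ by simpa using List.count_le_length (l := [u])⟩
  | insert e E he ih =>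
    obtain ⟨v, w, hlength, hcount⟩ := ih fun e' he' ↦ hE e' (mem_insert_of_mem he')
    obtain ⟨hadj, hreach⟩ := hE e (mem_insert_self e E)
    obtain ⟨z, hz_length, hz_count⟩ := exists_walk_alternating hadj (x e)
    obtain ⟨q, hq⟩ := (w.reachable.symm.trans hreach).exists_isPath
    refine ⟨_, (w.append q).append z, ?_, fun i ↦ ?_⟩
    · rw [sum_insert he, SimpleGraph.Walk.length_append, SimpleGraph.Walk.length_append]
      lia
    · have hq_count : q.support.tail.count i ≤ 1 :=
        ((List.tail_sublist _).count_le i).trans (List.nodup_iff_count_le_one.1 hq.support_nodup i)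
      have hz_tail : z.support.tail.count i ≤ z.support.count i :=
        (List.tail_sublist _).count_le i
      rw [sum_insert he, card_insert_of_notMem he, SimpleGraph.Walk.support_append,
        SimpleGraph.Walk.support_append, List.count_append, List.count_append]
      linarith [hcount i, hz_count i]

end Walks

section Edges

variable (G : SimpleGraph V) [DecidableRel G.Adj]

lemma card_interedges_eq_sum (A B : Finset V) :
    #(G.interedges A B) = ∑ v ∈ A, #{w ∈ B | G.Adj v w} := by
  simp only [SimpleGraph.interedges_def, card_filter, sum_product]

lemma card_interedges_univ_eq_sum_degree [Fintype V] (A : Finset V) :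
    #(G.interedges A univ) = ∑ v ∈ A, G.degree v := by
  simp only [card_interedges_eq_sum, ← SimpleGraph.neighborFinset_eq_filter,
    SimpleGraph.card_neighborFinset_eq_degree]

end Edges

section Clusters

variable [Fintype V]

open Classical in
/-- The `i`-th cluster of a vertex partition, which is encoded by the map `p` sending each vertex to
the index of its cluster. -/
noncomputable def cluster (p : V → ι) (i : ι) : Finset V := {v | p v = i}

@[simp]
lemma mem_cluster {p : V → ι} {i : ι} {v : V} : v ∈ cluster p i ↔ p v = i := by
  simp [cluster]

lemma sum_sum_cluster {M : Type*} [AddCommMonoid M] (p : V → ι) {s : Finset ι} {T : Finset V}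
    (hT : ∀ v, v ∈ T ↔ p v ∈ s) (f : V → M) :
    ∑ i ∈ s, ∑ v ∈ cluster p i, f v = ∑ v ∈ T, f v := by
  classical
  rw [← sum_fiberwise_of_maps_to (fun v hv ↦ (hT v).1 hv)]
  refine sum_congr rfl fun i hi ↦ sum_congr (ext fun v ↦ ?_) fun _ _ ↦ rfl
  simp only [mem_cluster, mem_filter, hT, iff_and_self]
  rintro rfl
  exact hi

lemma card_le_of_lt_mul_card_cluster (p : V → ι) {s : Finset ι} {k : ℕ}
    (hs : ∀ i ∈ s, Fintype.card V < (k + 1) * #(cluster p i)) : #s ≤ k := by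
  classical
  have hsum : ∑ i ∈ s, #(cluster p i) ≤ Fintype.card V := by
    simp only [card_eq_sum_ones, sum_sum_cluster p (s := s) (T := {v | p v ∈ s}) (by simp)]
    simpa using card_le_univ _
  have hlt : #s * (Fintype.card V + 1) ≤ (k + 1) * Fintype.card V :=
    calc #s * (Fintype.card V + 1) ≤ ∑ i ∈ s, (k + 1) * #(cluster p i) := by
          simpa using card_nsmul_le_sum s _ _ fun i hi ↦ Nat.succ_le_of_lt (hs i hi)
      _ = (k + 1) * ∑ i ∈ s, #(cluster p i) := (mul_sum ..).symm
      _ ≤ (k + 1) * Fintype.card V := by gcongr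
  by_contra! hk
  nlinarith

lemma card_cluster_le_card_sdiff_add_count [DecidableEq V] [DecidableEq ι] (p : V → ι) (i : ι)
    (l : List V) : #(cluster p i) ≤ #(cluster p i \ l.toFinset) + (l.map p).count i := by
  have hsub : cluster p i ⊆ cluster p i \ l.toFinset ∪ (l.filter (p · = i)).toFinset := by
    intro v hv
    simp only [mem_cluster] at hv
    simp [hv, em']
  refine (card_le_card hsub).trans ((card_union_le _ _).trans ?_)
  gcongr
  rw [List.count, List.countP_map, List.countP_eq_length_filter]
  exact List.toFinset_card_le _

lemma sum_card_interedges_cluster [Fintype ι] (H : SimpleGraph V) [DecidableRel H.Adj] (p : V → ι)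
    (A : Finset V) : ∑ j, #(H.interedges A (cluster p j)) = ∑ v ∈ A, H.degree v := by
  classical
  simp only [← card_interedges_univ_eq_sum_degree, card_interedges_eq_sum, card_filter]
  rw [sum_comm]
  exact sum_congr rfl fun v _ ↦ sum_sum_cluster p (by simp) _

end Clusters

section LowerRegular

variable {G : SimpleGraph V}

lemma isPathList_cons_cons {v w : V} {l : List V} :
    IsPathList G (w :: v :: l) ↔ G.Adj w v ∧ w ∉ v :: l ∧ IsPathList G (v :: l) := by
  constructor
  · rintro ⟨-, hchain, hnodup⟩
    obtain ⟨hadj, hchain⟩ := List.isChain_cons_cons.1 hchain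
    obtain ⟨hnot_mem, hnodup⟩ := List.nodup_cons.1 hnodup
    exact ⟨hadj, hnot_mem, by simp, hchain, hnodup⟩
  · rintro ⟨hadj, hnot_mem, -, hchain, hnodup⟩
    exact ⟨by simp, List.isChain_cons_cons.2 ⟨hadj, hchain⟩, List.nodup_cons.2 ⟨hnot_mem, hnodup⟩⟩

variable (G) [DecidableRel G.Adj]

/-- The pair `(U, W)` is lower `(ε, δ)`-regular in `G`: any subsets of `U` and `W` of at least an
`ε` proportion span edges of density at least `δ`. -/
def IsLowerRegular (ε δ : ℝ) (U W : Finset V) : Prop :=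
  ∀ ⦃A⦄, A ⊆ U → ∀ ⦃B⦄, B ⊆ W → ε * #U ≤ #A → ε * #W ≤ #B → δ ≤ G.edgeDensity A B

variable {G}

lemma isLowerRegular_of_isUniform {ε δ : ℝ} {U W : Finset V} (h : G.IsUniform ε U W)
    (hδ : δ + ε ≤ G.edgeDensity U W) : IsLowerRegular G ε δ U W := by
  intro A hA B hB hAcard hBcard
  have := (abs_lt.1 (h hA hB (by linarith) (by linarith))).1
  linarith

lemma exists_mul_card_le_card_filter_adj {A B : Finset V} {r : ℝ} (hr : 0 < r)
    (h : r ≤ G.edgeDensity A B) : ∃ v ∈ A, r * #B ≤ #{w ∈ B | G.Adj v w} := by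
  have hA : A.Nonempty := nonempty_iff_ne_empty.2 <| by
    rintro rfl
    simp [hr.not_ge] at h
  have hB : B.Nonempty := nonempty_iff_ne_empty.2 <| by
    rintro rfl
    simp [hr.not_ge] at h
  refine exists_le_of_sum_le hA ?_
  rw [SimpleGraph.edgeDensity_def] at h
  push_cast at h
  rw [le_div_iff₀ (by positivity)] at h
  rw [sum_const, nsmul_eq_mul, ← Nat.cast_sum, ← card_interedges_eq_sum]
  linarith

variable [Fintype V] [DecidableEq ι] {p : V → ι} {R : SimpleGraph ι} {δ ρ : ℝ}

-- Building the path backwards, each step keeps a whole set `A` of possible first vertices, which is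
-- large enough for lower regularity to supply the next step.
lemma exists_endpoints_of_walk (hδ₀ : 0 < δ) (hδ₁ : δ ≤ 1) (hρ₀ : 0 < ρ) (hρ₁ : ρ ≤ 1)
    (hreg : ∀ i j, R.Adj i j → IsLowerRegular G (δ * ρ) δ (cluster p i) (cluster p j))
    {i j : ι} (w : R.Walk i j) (hw : ∀ a, w.support.count a ≤ (1 - ρ) * #(cluster p a)) :
    ∃ l : List V, l.map p = w.support.tail ∧ ∃ A ⊆ cluster p i, δ * ρ * #(cluster p i) ≤ #A ∧
      ∀ v ∈ A, IsPathList G (v :: l) := by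
  classical
  induction w with
  | nil =>
    refine ⟨[], rfl, _, Subset.rfl, ?_, fun v _ ↦ ⟨by simp, List.isChain_singleton v, by simp⟩⟩
    exact mul_le_of_le_one_left (by positivity) (mul_le_one₀ hδ₁ hρ₀.le hρ₁)
  | @cons i u j h w ih =>
    obtain ⟨l, hl, A, hA, hAcard, hAl⟩ := ih fun a ↦ le_trans
      (mod_cast (List.sublist_cons_self _ _).count_le a) (hw a)
    set B := cluster p i \ l.toFinset with hB
    have hBcard : ρ * #(cluster p i) ≤ #B := by
      have hcover : (#(cluster p i) : ℝ) ≤ #B + (l.map p).count i := by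
        exact_mod_cast card_cluster_le_card_sdiff_add_count p i l
      have hcount : ((l.map p).count i : ℝ) ≤ (SimpleGraph.Walk.cons h w).support.count i := by
        rw [hl]
        exact_mod_cast ((List.tail_sublist _).trans (List.sublist_cons_self _ _)).count_le i
      linarith [hw i]
    have hBreg : δ * ρ * #(cluster p i) ≤ #B := by
      refine le_trans ?_ hBcard
      gcongr
      exact mul_le_of_le_one_left hρ₀.le hδ₁
    obtain ⟨v, hvA, hv⟩ := exists_mul_card_le_card_filter_adj hδ₀
      (hreg u i h.symm hA sdiff_subset hAcard hBreg)
    have hpv : p v = u := mem_cluster.1 (hA hvA)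
    refine ⟨v :: l, by simp [hl, hpv, w.cons_tail_support], {y ∈ B | G.Adj v y},
      (filter_subset _ _).trans sdiff_subset, ?_, fun y hy ↦ ?_⟩
    · calc δ * ρ * #(cluster p i) = δ * (ρ * #(cluster p i)) := mul_assoc ..
        _ ≤ δ * #B := by gcongr
        _ ≤ _ := hv
    · simp only [hB, mem_filter, mem_sdiff, mem_cluster, List.mem_toFinset] at hy
      obtain ⟨⟨_, hyl⟩, hvy⟩ := hy
      exact isPathList_cons_cons.2 ⟨hvy.symm, by simp [hvy.ne', hyl], hAl v hvA⟩

lemma exists_isPathList_map_eq_support (hδ₀ : 0 < δ) (hδ₁ : δ ≤ 1) (hρ₀ : 0 < ρ) (hρ₁ : ρ ≤ 1)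
    (hreg : ∀ i j, R.Adj i j → IsLowerRegular G (δ * ρ) δ (cluster p i) (cluster p j))
    {i j : ι} (w : R.Walk i j) (hw : ∀ a, w.support.count a ≤ (1 - ρ) * #(cluster p a)) :
    ∃ l : List V, IsPathList G l ∧ l.map p = w.support := by
  obtain ⟨l, hl, A, hA, hAcard, hAl⟩ := exists_endpoints_of_walk hδ₀ hδ₁ hρ₀ hρ₁ hreg w hw
  have hcluster : (0 : ℝ) < #(cluster p i) := by
    have hvisit : (1 : ℝ) ≤ w.support.count i := by
      exact_mod_cast List.count_pos_iff.2 w.start_mem_support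
    nlinarith [hw i]
  have hAne : A.Nonempty := by
    rw [← card_pos, ← Nat.cast_pos (α := ℝ)]
    exact lt_of_lt_of_le (by positivity) hAcard
  obtain ⟨v, hv⟩ := hAne
  refine ⟨v :: l, hAl v hv, ?_⟩
  rw [List.map_cons, hl, mem_cluster.1 (hA hv), w.cons_tail_support]

end LowerRegular

section Components

variable {R : SimpleGraph ι}

lemma exists_walk_in_connectedComponent [Fintype ι] [DecidableEq ι] {x : ι → ι → ℕ}
    (hx : ∀ i j, x i j = x j i) (hxR : ∀ i j, x i j ≠ 0 → R.Adj i j) (K : R.ConnectedComponent) :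
    ∃ u v, ∃ w : R.Walk u v, (∀ i ∈ w.support, R.connectedComponentMk i = K) ∧
      (∀ i, w.support.count i ≤ 2 * ∑ j, x i j + 2 * Fintype.card ι ^ 2 + 1) ∧
      2 * ∑ i ∈ cluster R.connectedComponentMk K, ∑ j, x i j ≤ w.length := by
  classical
  induction K using SimpleGraph.ConnectedComponent.ind with | _ u
  set C := cluster R.connectedComponentMk (R.connectedComponentMk u) with hC
  set E : Finset (ι × ι) := {e ∈ C ×ˢ univ | R.Adj e.1 e.2} with hE
  obtain ⟨v, w, hlength, hcount⟩ := exists_walk_traversing (R := R) (fun e ↦ x e.1 e.2) u E <| by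
    intro e he
    simp only [hE, hC, mem_filter, mem_product, mem_cluster] at he
    exact ⟨he.2, (SimpleGraph.ConnectedComponent.exact he.1.1).symm⟩
  refine ⟨u, v, w, fun i hi ↦ ?_, fun i ↦ ?_, ?_⟩
  · exact SimpleGraph.ConnectedComponent.sound (w.takeUntil i hi).reachable.symm
  · have hsum : ∑ e ∈ E, x e.1 e.2 * [e.1, e.2].count i ≤ 2 * ∑ j, x i j :=
      calc ∑ e ∈ E, x e.1 e.2 * [e.1, e.2].count i
          ≤ ∑ e : ι × ι, x e.1 e.2 * [e.1, e.2].count i := sum_le_sum_of_subset (subset_univ _)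
        _ = ∑ a, ∑ b, ((if b = i then x a b else 0) + if a = i then x a b else 0) := by
          rw [Fintype.sum_prod_type]
          simp [List.count_cons, mul_add]
        _ = ∑ a, x a i + ∑ b, x i b := by
          simp only [sum_add_distrib, sum_ite_eq', mem_univ, if_true]
          rw [sum_comm (f := fun a b ↦ if a = i then x a b else 0)]
          simp
        _ = 2 * ∑ j, x i j := by simp only [hx _ i, two_mul]
    have hcard : #E ≤ Fintype.card ι ^ 2 := (card_le_univ E).trans_eq (by simp [sq])
    linarith [hcount i]
  · rwa [hE, sum_filter_of_ne fun e _ ↦ hxR e.1 e.2, sum_product] at hlength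

variable [Fintype V] (H : SimpleGraph V) [DecidableRel H.Adj] (p : V → ι)

/-- How often the walk through the reduced graph traverses the edge `ij` in each direction: `t`
times the number of edges of `H` between the `i`-th and the `j`-th cluster, rounded down. -/
noncomputable def traversals (t : ℝ) (i j : ι) : ℕ :=
  ⌊t * #(H.interedges (cluster p i) (cluster p j))⌋₊

variable {H p}

lemma traversals_comm (t : ℝ) (i j : ι) : traversals H p t i j = traversals H p t j i := by
  have := H.symm
  rw [traversals, traversals, SimpleGraph.interedges, SimpleGraph.interedges,
    Rel.card_interedges_comm]

lemma adj_of_traversals_ne_zero (hHR : H ≤ R.comap p) {t : ℝ} {i j : ι}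
    (h : traversals H p t i j ≠ 0) : R.Adj i j := by
  have hne : (H.interedges (cluster p i) (cluster p j)).Nonempty := by
    rw [nonempty_iff_ne_empty]
    intro hempty
    simp [traversals, hempty] at h
  obtain ⟨⟨v, w⟩, hvw⟩ := hne
  rw [SimpleGraph.mem_interedges_iff, mem_cluster, mem_cluster] at hvw
  obtain ⟨rfl, rfl, hadj⟩ := hvw
  exact hHR hadj

variable [Fintype ι]

lemma sum_traversals_le {t : ℝ} (ht : 0 ≤ t) (i : ι) :
    ∑ j, (traversals H p t i j : ℝ) ≤ t * ∑ v ∈ cluster p i, (H.degree v : ℝ) := by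
  rw [← Nat.cast_sum _ (H.degree ·), ← sum_card_interedges_cluster H p, Nat.cast_sum, mul_sum]
  exact sum_le_sum fun j _ ↦ Nat.floor_le (by positivity)

lemma le_sum_traversals (t : ℝ) (i : ι) :
    t * ∑ v ∈ cluster p i, (H.degree v : ℝ) - Fintype.card ι ≤
      ∑ j, (traversals H p t i j : ℝ) := by
  rw [← Nat.cast_sum, ← sum_card_interedges_cluster H p, Nat.cast_sum, mul_sum, sub_le_iff_le_add]
  calc ∑ j, t * (#(H.interedges (cluster p i) (cluster p j)) : ℝ)
      ≤ ∑ j, ((traversals H p t i j : ℝ) + 1) := sum_le_sum fun j _ ↦ (Nat.lt_floor_add_one _).le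
    _ = _ := by simp [sum_add_distrib]

lemma sum_cluster_component_le_two_mul_sum_traversals {t ρ : ℝ}
    (hsize : ∀ i, 2 * (Fintype.card ι : ℝ) ≤ ρ * #(cluster p i)) (K : R.ConnectedComponent) :
    ∑ v ∈ cluster (fun v ↦ R.connectedComponentMk (p v)) K, (2 * t * H.degree v - ρ) ≤
      2 * ∑ i ∈ cluster R.connectedComponentMk K, ∑ j, (traversals H p t i j : ℝ) := by
  have hcluster (i : ι) : ∑ v ∈ cluster p i, (2 * t * H.degree v - ρ) ≤
      2 * ∑ j, (traversals H p t i j : ℝ) := by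
    rw [sum_sub_distrib, ← mul_sum, sum_const, nsmul_eq_mul]
    linarith [le_sum_traversals (H := H) (p := p) t i, hsize i]
  rw [mul_sum, ← sum_sum_cluster p (s := cluster R.connectedComponentMk K) (by simp)]
  exact sum_le_sum fun i _ ↦ hcluster i

lemma exists_isPathList_in_component {G : SimpleGraph V} [DecidableRel G.Adj]
    {δ ρ : ℝ} {d : ℕ} (hδ₀ : 0 < δ) (hδ₁ : δ ≤ 1) (hρ₀ : 0 < ρ) (hρ₁ : ρ ≤ 1 / 2)
    (hreg : ∀ i j, R.Adj i j → IsLowerRegular G (δ * ρ) δ (cluster p i) (cluster p j))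
    (hsize : ∀ i, 2 * (Fintype.card ι : ℝ) ^ 2 + 1 ≤ ρ * #(cluster p i))
    (hHR : H ≤ R.comap p) (hdeg : ∀ v, H.degree v ≤ d) (K : R.ConnectedComponent) :
    ∃ l, IsPathList G l ∧ (∀ v ∈ l, R.connectedComponentMk (p v) = K) ∧
      ∑ v ∈ cluster (fun v ↦ R.connectedComponentMk (p v)) K,
        ((1 - 2 * ρ) * (H.degree v / d) - ρ) ≤ l.length := by
  classical
  set t := (1 - 2 * ρ) / (2 * d) with ht
  have ht₀ : 0 ≤ t := div_nonneg (by linarith) (by positivity)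
  have htd : 2 * (t * d) ≤ 1 - 2 * ρ := by
    rw [show 2 * (t * d) = (1 - 2 * ρ) * (d / d) by rw [ht]; ring]
    exact mul_le_of_le_one_right (by linarith) (div_self_le_one _)
  obtain ⟨u, v, w, hwK, hcount, hlength⟩ := exists_walk_in_connectedComponent
    (traversals_comm (H := H) (p := p) t) (fun i j ↦ adj_of_traversals_ne_zero hHR) K
  obtain ⟨l, hl, hlw⟩ := exists_isPathList_map_eq_support hδ₀ hδ₁ hρ₀ (by linarith) hreg w <| by
    intro i
    have hcount_i : (w.support.count i : ℝ) ≤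
        2 * ∑ j, (traversals H p t i j : ℝ) + 2 * (Fintype.card ι : ℝ) ^ 2 + 1 := by
      exact_mod_cast hcount i
    have hdeg_sum : t * ∑ v ∈ cluster p i, (H.degree v : ℝ) ≤ t * (#(cluster p i) * d) := by
      gcongr
      rw [← nsmul_eq_mul]
      exact sum_le_card_nsmul _ _ _ fun v _ ↦ mod_cast hdeg v
    have := mul_le_mul_of_nonneg_right htd (Nat.cast_nonneg (α := ℝ) #(cluster p i))
    linarith [sum_traversals_le (H := H) (p := p) ht₀ i, hsize i]
  refine ⟨l, hl, fun v hv ↦ hwK _ (hlw ▸ List.mem_map_of_mem hv), ?_⟩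
  have hcard : (Fintype.card ι : ℝ) ≤ (Fintype.card ι : ℝ) ^ 2 := by
    exact_mod_cast Nat.le_self_pow two_ne_zero _
  calc _ = ∑ v ∈ cluster (fun v ↦ R.connectedComponentMk (p v)) K, (2 * t * H.degree v - ρ) :=
        sum_congr rfl fun v _ ↦ by rw [ht]; ring
    _ ≤ 2 * ∑ i ∈ cluster R.connectedComponentMk K, ∑ j, (traversals H p t i j : ℝ) :=
        sum_cluster_component_le_two_mul_sum_traversals (fun i ↦ by linarith [hsize i]) K
    _ ≤ w.length := by exact_mod_cast hlength
    _ ≤ l.length := by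
        rw [← List.length_map (f := p), hlw, w.length_support]
        simp

end Components

section PathSystems

/-- `P` is a system of vertex-disjoint paths of `G`. -/
def IsPathSystem (G : SimpleGraph V) (P : Finset (List V)) : Prop :=
  (∀ l ∈ P, IsPathList G l) ∧ ∀ l ∈ P, ∀ l' ∈ P, l ≠ l' → ∀ v, v ∈ l → v ∉ l'

variable [Fintype V] [DecidableEq V] {G : SimpleGraph V} {C : Type*} {κ : V → C}

lemma exists_isPathSystem_of_forall_mem_fiber (s : Finset C) {l : C → List V}
    (hl : ∀ K ∈ s, IsPathList G (l K)) (hκ : ∀ K ∈ s, ∀ v ∈ l K, κ v = K) :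
    ∃ P : Finset (List V), IsPathSystem G P ∧ #P ≤ #s ∧
      #{v | ∀ l ∈ P, v ∉ l} + ∑ K ∈ s, (l K).length = Fintype.card V := by
  classical
  refine ⟨s.image l, ⟨by simpa using hl, ?_⟩, card_image_le, ?_⟩
  · simp only [forall_mem_image]
    intro K hK K' hK' hne v hv hv'
    exact hne (by rw [← hκ K hK v hv, hκ K' hK' v hv'])
  have hcovered : ∑ K ∈ s, (l K).length = #(s.biUnion fun K ↦ (l K).toFinset) := by
    rw [card_biUnion]
    · exact sum_congr rfl fun K hK ↦ (List.toFinset_card_of_nodup (hl K hK).2.2).symm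
    · intro K hK K' hK' hne
      refine disjoint_left.2 fun v hv hv' ↦ hne ?_
      rw [← hκ K hK v (List.mem_toFinset.1 hv), hκ K' hK' v (List.mem_toFinset.1 hv')]
  have huncovered : ({v | ∀ l' ∈ s.image l, v ∉ l'} : Finset V) =
      (s.biUnion fun K ↦ (l K).toFinset)ᶜ := by
    ext v
    simp
  rw [hcovered, huncovered, card_compl_add_card]

end PathSystems

section LargeComponents

variable [Fintype V] {p : V → ι} {R : SimpleGraph ι} {H : SimpleGraph V}
  [DecidableRel H.Adj] {β η : ℝ} {d k : ℕ}

lemma degree_le_card_cluster_connectedComponent (hHR : H ≤ R.comap p) (v : V) :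
    H.degree v ≤
      #(cluster (fun v ↦ R.connectedComponentMk (p v)) (R.connectedComponentMk (p v))) := by
  rw [← SimpleGraph.card_neighborFinset_eq_degree]
  refine card_le_card fun w hw ↦ mem_cluster.2 ?_
  have hadj : R.Adj (p v) (p w) := hHR ((H.mem_neighborFinset v w).1 hw)
  exact (SimpleGraph.ConnectedComponent.connectedComponentMk_eq_of_adj hadj).symm

variable [Nonempty V]

-- A vertex in a component with at most `n / (k + 1)` vertices misses at least `η n` neighbours.
lemma card_small_component_le (hη : 0 < η)
    (hd : (η + 1 / (k + 1)) * Fintype.card V ≤ d) (hHR : H ≤ R.comap p)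
    (hdeg : ∀ v, H.degree v ≤ d)
    (hlost : ∑ v, ((d : ℝ) - H.degree v) ≤ β * η * (Fintype.card V : ℝ) ^ 2) {T : Finset V}
    (hT : ∀ v ∈ T, (k + 1) * #(cluster (fun v ↦ R.connectedComponentMk (p v))
      (R.connectedComponentMk (p v))) ≤ Fintype.card V) :
    (#T : ℝ) ≤ β * Fintype.card V := by
  set n := Fintype.card V
  have : (0 : ℝ) < n := by exact_mod_cast Fintype.card_pos
  have hmissing : ∀ v ∈ T, η * n ≤ d - H.degree v := by
    intro v hv
    have hsmall : (k + 1) * (H.degree v : ℝ) ≤ n := by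
      exact_mod_cast (Nat.mul_le_mul_left _ (degree_le_card_cluster_connectedComponent hHR v)).trans
        (hT v hv)
    have hdegree : (H.degree v : ℝ) ≤ 1 / (k + 1) * n := by
      rw [one_div_mul_eq_div, le_div_iff₀ (by positivity)]
      linarith
    linarith
  have hsum : #T * (η * n) ≤ β * n * (η * n) :=
    calc #T * (η * n) ≤ ∑ v ∈ T, ((d : ℝ) - H.degree v) := by
          simpa only [nsmul_eq_mul] using card_nsmul_le_sum T _ _ hmissing
      _ ≤ ∑ v, ((d : ℝ) - H.degree v) := sum_le_univ_sum_of_nonneg fun v ↦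
          sub_nonneg.2 (mod_cast hdeg v)
      _ ≤ β * n * (η * n) := hlost.trans_eq (by ring)
  exact le_of_mul_le_mul_right hsum (by positivity)

lemma le_sum_degree_div (hβ : 0 ≤ β) (hη : 0 < η) (hd : η * Fintype.card V ≤ d)
    (hdeg : ∀ v, H.degree v ≤ d)
    (hlost : ∑ v, ((d : ℝ) - H.degree v) ≤ β * η * (Fintype.card V : ℝ) ^ 2) (B : Finset V) :
    #B - 4 * β * Fintype.card V ≤ ∑ v ∈ B, ((1 - 2 * β) * (H.degree v / d) - β) := by
  set n := Fintype.card V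
  have : (0 : ℝ) < n := by exact_mod_cast Fintype.card_pos
  have hd₀ : (0 : ℝ) < d := lt_of_lt_of_le (by positivity) hd
  have hmissing : ∑ v ∈ B, ((d : ℝ) - H.degree v) / d ≤ β * n :=
    calc ∑ v ∈ B, ((d : ℝ) - H.degree v) / d ≤ ∑ v, ((d : ℝ) - H.degree v) / d :=
          sum_le_univ_sum_of_nonneg fun v ↦
            div_nonneg (sub_nonneg.2 (mod_cast hdeg v)) hd₀.le
      _ = (∑ v, ((d : ℝ) - H.degree v)) / d := (sum_div ..).symm
      _ ≤ β * n := by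
          rw [div_le_iff₀ hd₀]
          calc _ ≤ β * n * (η * n) := hlost.trans_eq (by ring)
            _ ≤ β * n * d := by gcongr
  have hpoint : ∀ v ∈ B, 1 - 3 * β - ((d : ℝ) - H.degree v) / d ≤
      (1 - 2 * β) * (H.degree v / d) - β := by
    intro v _
    have hratio : (H.degree v / d : ℝ) ≤ 1 := (div_le_one hd₀).2 (mod_cast hdeg v)
    rw [sub_div, div_self hd₀.ne']
    nlinarith
  have hB : β * #B ≤ β * n := by
    gcongr
    exact card_le_univ B
  refine le_trans ?_ (sum_le_sum hpoint)
  rw [sum_sub_distrib, sum_const, nsmul_eq_mul]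
  linarith

lemma exists_isPathSystem_of_lowerRegular [DecidableEq V] [Fintype ι] {G : SimpleGraph V}
    [DecidableRel G.Adj] {δ : ℝ} (hδ₀ : 0 < δ) (hδ₁ : δ ≤ 1) (hβ₀ : 0 < β) (hβ₁ : β ≤ 1 / 2)
    (hη : 0 < η) (hd : (η + 1 / (k + 1)) * Fintype.card V ≤ d)
    (hreg : ∀ i j, R.Adj i j → IsLowerRegular G (δ * β) δ (cluster p i) (cluster p j))
    (hsize : ∀ i, 2 * (Fintype.card ι : ℝ) ^ 2 + 1 ≤ β * #(cluster p i))
    (hHR : H ≤ R.comap p) (hdeg : ∀ v, H.degree v ≤ d)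
    (hlost : ∑ v, ((d : ℝ) - H.degree v) ≤ β * η * (Fintype.card V : ℝ) ^ 2) :
    ∃ P : Finset (List V), IsPathSystem G P ∧ #P ≤ k ∧
      (#{v | ∀ l ∈ P, v ∉ l} : ℝ) ≤ 5 * β * Fintype.card V := by
  classical
  set κ := fun v ↦ R.connectedComponentMk (p v)
  choose l hl hlκ hlength using
    exists_isPathList_in_component hδ₀ hδ₁ hβ₀ hβ₁ hreg hsize hHR hdeg
  set big : Finset R.ConnectedComponent := {K | Fintype.card V < (k + 1) * #(cluster κ K)}
  set B : Finset V := {v | κ v ∈ big}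
  obtain ⟨P, hP, hPcard, hPcover⟩ :=
    exists_isPathSystem_of_forall_mem_fiber (κ := κ) big (fun K _ ↦ hl K) fun K _ ↦ hlκ K
  refine ⟨P, hP, hPcard.trans (card_le_of_lt_mul_card_cluster κ (by simp [big])), ?_⟩
  have hsmall : (#Bᶜ : ℝ) ≤ β * Fintype.card V :=
    card_small_component_le hη hd hHR hdeg hlost (by simp [B, big, κ])
  have hηd : η * Fintype.card V ≤ d := by
    refine le_trans ?_ hd
    gcongr
    exact le_add_of_nonneg_right (by positivity)
  have hcovered : #B - 4 * β * Fintype.card V ≤ ∑ K ∈ big, ((l K).length : ℝ) :=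
    calc _ ≤ ∑ v ∈ B, ((1 - 2 * β) * (H.degree v / d) - β) :=
          le_sum_degree_div hβ₀.le hη hηd hdeg hlost B
      _ = ∑ K ∈ big, ∑ v ∈ cluster κ K, ((1 - 2 * β) * (H.degree v / d) - β) :=
          (sum_sum_cluster κ (by simp [B]) _).symm
      _ ≤ _ := sum_le_sum fun K _ ↦ hlength K
  have hBcard : (#Bᶜ + #B : ℝ) = Fintype.card V := by exact_mod_cast card_compl_add_card B
  have hPcover_real : (#{v | ∀ l ∈ P, v ∉ l} + ∑ K ∈ big, ((l K).length : ℝ)) = Fintype.card V := by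
    exact_mod_cast hPcover
  linarith

end LargeComponents

section Regularity

lemma exists_uniform_finpartition {ε : ℝ} (hε : 0 < ε) (l : ℕ) (f : ℕ → ℕ) :
    ∃ n₀ : ℕ, ∀ (V : Type u) [Fintype V] [DecidableEq V] (G : SimpleGraph V) [DecidableRel G.Adj],
      n₀ ≤ Fintype.card V → ∃ P : Finpartition (univ : Finset V), P.IsEquipartition ∧
        l ≤ #P.parts ∧ P.IsUniform G ε ∧ ∀ U ∈ P.parts, f #P.parts ≤ #U := by
  set N := SzemerediRegularity.bound ε l
  refine ⟨max l ((∑ m ∈ range (N + 1), f m) * N), fun V _ _ G _ hV ↦ ?_⟩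
  obtain ⟨P, hP, hl, hN, hunif⟩ := szemeredi_regularity G hε ((le_max_left _ _).trans hV)
  refine ⟨P, hP, hl, hunif, fun U hU ↦ ?_⟩
  calc f #P.parts ≤ ∑ m ∈ range (N + 1), f m :=
        single_le_sum_of_canonicallyOrdered (mem_range.2 (Nat.lt_succ_of_le hN))
    _ ≤ Fintype.card V / N :=
        (Nat.le_div_iff_mul_le (SzemerediRegularity.bound_pos ε l)).2 ((le_max_right _ _).trans hV)
    _ ≤ Fintype.card V / #P.parts := Nat.div_le_div_left hN (card_pos.2 ⟨U, hU⟩)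
    _ ≤ #U := hP.average_le_card_part hU

variable [Fintype V] [DecidableEq V] (P : Finpartition (univ : Finset V)) (G : SimpleGraph V)
  [DecidableRel G.Adj] (ε δ : ℝ)

/-- The partition map of `P`, so that the parts of `P` are its clusters. -/
def toPart (v : V) : P.parts := ⟨P.part v, P.part_mem.2 (mem_univ v)⟩

lemma cluster_toPart (U : P.parts) : cluster (toPart P) U = U := by
  ext v
  rw [mem_cluster, toPart, Subtype.ext_iff]
  exact P.part_eq_iff_mem U.2

/-- The reduced graph of `P`: its vertices are the parts of `P`, two of which are adjacent if they
form an `ε`-uniform pair of density at least `δ` in `G`. -/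
def reducedGraph : SimpleGraph P.parts where
  Adj U W := U ≠ W ∧ G.IsUniform ε U.1 W.1 ∧ δ ≤ G.edgeDensity U.1 W.1
  symm := ⟨fun U W h ↦ ⟨h.1.symm, h.2.1.symm, by rw [G.edgeDensity_comm]; exact h.2.2⟩⟩
  loopless := ⟨fun U h ↦ h.1 rfl⟩

variable {P G ε δ}

lemma regularityReduced_le_comap_reducedGraph :
    G.regularityReduced P ε δ ≤ (reducedGraph P G ε δ).comap (toPart P) := by
  rintro v w ⟨-, U, hU, W, hW, hv, hw, hUW, hunif, hdens⟩
  obtain rfl := P.part_eq_of_mem hU hv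
  obtain rfl := P.part_eq_of_mem hW hw
  exact ⟨fun h ↦ hUW (congrArg Subtype.val h), hunif, hdens⟩

lemma isLowerRegular_of_reducedGraph_adj {r : ℝ} (hr : r + ε ≤ δ) {U W : P.parts}
    (h : (reducedGraph P G ε δ).Adj U W) :
    IsLowerRegular G ε r (cluster (toPart P) U) (cluster (toPart P) W) := by
  rw [cluster_toPart, cluster_toPart]
  exact isLowerRegular_of_isUniform h.2.1 (hr.trans h.2.2)

lemma interedges_subset_regularityReduced_union :
    G.interedges univ univ ⊆ (G.regularityReduced P ε δ).interedges univ univ ∪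
      ((P.nonUniforms G ε).biUnion (fun UW ↦ UW.1 ×ˢ UW.2) ∪ P.parts.biUnion offDiag ∪
        (P.sparsePairs G δ).biUnion fun UW ↦ G.interedges UW.1 UW.2) := by
  rintro ⟨v, w⟩ hvw
  have hadj : G.Adj v w := (SimpleGraph.mem_interedges_iff G).1 hvw |>.2.2
  obtain ⟨U, hU, hv⟩ := P.exists_mem (mem_univ v)
  obtain ⟨W, hW, hw⟩ := P.exists_mem (mem_univ w)
  simp only [mem_union, mem_biUnion, Prod.exists, P.mk_mem_nonUniforms, mem_product, mem_offDiag,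
    Finpartition.mk_mem_sparsePairs, SimpleGraph.mk_mem_interedges_iff]
  obtain rfl | hUW := eq_or_ne U W
  · exact .inr (.inl (.inr ⟨U, hU, hv, hw, hadj.ne⟩))
  by_cases hunif : G.IsUniform ε U W
  · obtain hdens | hdens := le_or_gt δ (G.edgeDensity U W)
    · exact .inl ⟨mem_univ v, mem_univ w, hadj, U, hU, W, hW, hv, hw, hUW, hunif, hdens⟩
    · exact .inr (.inr ⟨U, W, ⟨hU, hW, hUW, hdens⟩, hv, hw, hadj⟩)
  · exact .inr (.inl (.inl ⟨U, W, ⟨hU, hW, hUW, hunif⟩, hv, hw⟩))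

lemma sum_degree_le_sum_degree_regularityReduced_add [Nonempty V] (hε : 0 < ε) (hδ : 0 < δ)
    (hP : P.IsEquipartition) (hunif : P.IsUniform G ε) (hparts : 1 / δ ≤ #P.parts) :
    ∑ v, (G.degree v : ℝ) ≤ ∑ v, ((G.regularityReduced P ε δ).degree v : ℝ) +
      (4 * ε + 6 * δ) * (Fintype.card V : ℝ) ^ 2 := by
  have hcard := (card_le_card (interedges_subset_regularityReduced_union (P := P) (G := G)
    (ε := ε) (δ := δ))).trans <| (card_union_le _ _).trans <| Nat.add_le_add_left
      ((card_union_le _ _).trans <| Nat.add_le_add_right (card_union_le _ _) _) _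
  rw [card_interedges_univ_eq_sum_degree, card_interedges_univ_eq_sum_degree] at hcard
  have hcard_real := (Nat.cast_le (α := ℝ)).2 hcard
  push_cast at hcard_real
  have hnonUniforms := hP.sum_nonUniforms_lt univ_nonempty hε hunif
  have hoffDiag := hP.card_biUnion_offDiag_le (𝕜 := ℝ) (ε := 4 * δ) (by positivity) (by
    rwa [mul_comm 4 δ, div_mul_cancel_right₀ four_ne_zero, ← one_div])
  have hsparse := hP.card_interedges_sparsePairs_le (G := G) hδ.le
  rw [card_univ] at hnonUniforms hoffDiag hsparse
  linarith

lemma exists_isPathSystem_of_isUniform [Nonempty V] {β η : ℝ} {d k : ℕ} (hδ₀ : 0 < δ) (hδ₁ : δ ≤ 1)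
    (hβ₀ : 0 < β) (hβ₁ : β ≤ 1 / 2) (hη : 0 < η) (hδη : 16 * δ ≤ β * η)
    (hd : (η + 1 / (k + 1)) * Fintype.card V ≤ d) (hG : G.IsRegularOfDegree d)
    (hP : P.IsEquipartition) (hunif : P.IsUniform G (δ * β)) (hparts : 1 / (2 * δ) ≤ #P.parts)
    (hsize : ∀ U ∈ P.parts, 2 * (#P.parts : ℝ) ^ 2 + 1 ≤ β * #U) :
    ∃ Q : Finset (List V), IsPathSystem G Q ∧ #Q ≤ k ∧
      (#{v | ∀ l ∈ Q, v ∉ l} : ℝ) ≤ 5 * β * Fintype.card V := by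
  set H := G.regularityReduced P (δ * β) (2 * δ)
  have hδβ : δ * β ≤ δ := mul_le_of_le_one_right hδ₀.le (by linarith)
  have hlost : ∑ v, ((d : ℝ) - H.degree v) ≤ β * η * (Fintype.card V : ℝ) ^ 2 :=
    calc ∑ v, ((d : ℝ) - H.degree v) = ∑ v, (G.degree v : ℝ) - ∑ v, (H.degree v : ℝ) := by
          simp only [sum_sub_distrib, hG.degree_eq]
      _ ≤ (4 * (δ * β) + 6 * (2 * δ)) * (Fintype.card V : ℝ) ^ 2 := by
          rw [sub_le_iff_le_add']
          exact sum_degree_le_sum_degree_regularityReduced_add (mul_pos hδ₀ hβ₀)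
            (mul_pos two_pos hδ₀) hP hunif hparts
      _ ≤ β * η * (Fintype.card V : ℝ) ^ 2 := by
          gcongr
          linarith
  exact exists_isPathSystem_of_lowerRegular hδ₀ hδ₁ hβ₀ hβ₁ hη hd
    (fun U W ↦ isLowerRegular_of_reducedGraph_adj (by linarith))
    (fun U ↦ by simpa [cluster_toPart] using hsize U U.2)
    regularityReduced_le_comap_reducedGraph
    (fun v ↦ (SimpleGraph.degree_le_of_le SimpleGraph.regularityReduced_le).trans_eq (hG v)) hlost

end Regularity

theorem stmt_16_general (c α : ℝ) (hc₀ : 0 < c) (hc₁ : c ≤ 1) (hα : 0 < α) :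
    ∃ n₀ : ℕ, ∀ (V : Type u) [Fintype V] [DecidableEq V] (G : SimpleGraph V) [DecidableRel G.Adj]
      (d : ℕ), n₀ ≤ Fintype.card V → c * Fintype.card V ≤ d → G.IsRegularOfDegree d →
        ∃ P : Finset (List V), IsPathSystem G P ∧ #P ≤ ⌊1 / c⌋₊ ∧
          (#{v | ∀ l ∈ P, v ∉ l} : ℝ) ≤ α * Fintype.card V := by
  set k := ⌊1 / c⌋₊
  set β := min (1 / 2) (α / 5)
  set η := c - 1 / (k + 1 : ℝ) with hη
  set δ := β * η / 16 with hδ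
  have hβ₀ : 0 < β := by positivity
  have hβ₁ : β ≤ 1 / 2 := min_le_left _ _
  have hβα : 5 * β ≤ α := by linarith [min_le_right (1 / 2) (α / 5)]
  have hη₀ : 0 < η := by
    rw [hη, sub_pos, one_div_lt (by positivity) hc₀]
    exact Nat.lt_floor_add_one _
  have hη₁ : η ≤ 1 := (sub_le_self c (by positivity)).trans hc₁
  have hδ₀ : 0 < δ := by positivity
  have hδ₁ : δ ≤ 1 := by nlinarith
  obtain ⟨n₀, hn₀⟩ := exists_uniform_finpartition (mul_pos hδ₀ hβ₀) ⌈1 / (2 * δ)⌉₊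
    fun m ↦ ⌈(2 * (m : ℝ) ^ 2 + 1) / β⌉₊
  refine ⟨max n₀ 1, fun V _ _ G _ d hV hd hG ↦ ?_⟩
  have : Nonempty V := Fintype.card_pos_iff.1 ((le_max_right _ _).trans hV)
  obtain ⟨P, hP, hparts, hunif, hsize⟩ := hn₀ V G ((le_max_left _ _).trans hV)
  obtain ⟨Q, hQ, hQk, hQcover⟩ := exists_isPathSystem_of_isUniform hδ₀ hδ₁ hβ₀ hβ₁ hη₀
    (by rw [hδ]; linarith) (by rwa [hη, sub_add_cancel]) hG hP hunif (Nat.ceil_le.1 hparts)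
    fun U hU ↦ (div_le_iff₀' hβ₀).1 (Nat.ceil_le.1 (hsize U hU))
  exact ⟨Q, hQ, hQk, hQcover.trans (by gcongr)⟩

/-- Theorem 1(1): for `c ∈ (0,1]`, `α > 0` and `n` large, every `⌈cn⌉`-regular graph
on `n` vertices has at most `⌊1/c⌋` vertex-disjoint paths covering all but at most
`αn` vertices. -/
theorem stmt_16 (c α : ℝ) (hc0 : 0 < c) (hc1 : c ≤ 1) (hα : 0 < α) :
    ∃ n₀ : ℕ, ∀ n : ℕ, n₀ ≤ n →
      ∀ (V : Type) [Fintype V] [DecidableEq V] (G : SimpleGraph V) [DecidableRel G.Adj],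
        Fintype.card V = n → G.IsRegularOfDegree ⌈c * n⌉₊ →
        ∃ P : Finset (List V),
          (∀ l ∈ P, IsPathList G l) ∧
          (∀ l ∈ P, ∀ l' ∈ P, l ≠ l' → ∀ v, v ∈ l → v ∉ l') ∧
          P.card ≤ ⌊1 / c⌋₊ ∧
          ((Finset.univ.filter (fun v : V => ∀ l ∈ P, v ∉ l)).card : ℝ) ≤ α * n := by
  obtain ⟨n₀, hn₀⟩ := stmt_16_general c α hc0 hc1 hα
  refine ⟨n₀, fun n hn V _ _ G _ hV hG ↦ ?_⟩
  subst hV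
  obtain ⟨P, ⟨hpath, hdisj⟩, hcard, hcover⟩ := hn₀ V G _ hn (Nat.le_ceil _) hG
  exact ⟨P, hpath, hdisj, hcard, hcover⟩
end

section
/- For every c ∈ (0,1] and α > 0 there exists n₀ such that for all n ≥ n₀: every bipartite ⌈cn⌉-regular graph G on n vertices contains at most ⌊1/(2c)⌋ vertex-disjoint paths whose union covers all but at most αn vertices of G. -/
open Finset

/-
Colour the vertices with a bounded number `t` of colours so that almost every vertex has about
`d / t` neighbours of each colour. The edges between two consecutive colour classes then form an
almost regular bipartite graph, so a deficiency version of the marriage theorem matches them almost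
perfectly, and the union of these matchings covers all but the first `s` classes by `O(n / t)`
disjoint paths. The first `s` classes serve as a reservoir for joining these paths: a triangle-free
graph of minimum degree `δ` has no component with fewer than `2 * δ` vertices, so as long as more
than `⌊1 / (2 * c)⌋` paths are left, the ends of two of them have neighbours in the same component
of the unused part of the reservoir. A shortest path in this component has bounded length, because
every vertex has at most three neighbours on it, and so the reservoir is not exhausted.
-/

section BalancedColoring

variable {α ι E : Type*} [DecidableEq ι]

theorem sum_filter_insert_update {M : Type*} [AddCommMonoid M] [DecidableEq α] {A : Finset α}
    {a : α} (ha : a ∉ A) (f : α → ι) (u : α → M) (i j : ι) :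
    ∑ x ∈ insert a A with Function.update f a i x = j, u x
      = ∑ x ∈ A with f x = j, u x + if j = i then u a else 0 := by
  simp only [sum_filter, sum_insert ha, Function.update_self, eq_comm (a := j)]
  rw [add_comm]
  congr 1
  refine sum_congr rfl fun x hx => ?_
  rw [Function.update_of_ne (ne_of_mem_of_not_mem hx ha)]

variable [Fintype ι] [Nonempty ι] [NormedAddCommGroup E] [InnerProductSpace ℝ E]

-- The colour of each new vector `u a` is chosen so that its inner product with the sum of its
-- class is at most the average over all classes.
theorem exists_sum_norm_sq_colorClass_le (u : α → E) (A : Finset α) :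
    ∃ f : α → ι, ∑ i, ‖∑ x ∈ A with f x = i, u x‖ ^ 2
      ≤ ‖∑ x ∈ A, u x‖ ^ 2 / Fintype.card ι + ∑ x ∈ A, ‖u x‖ ^ 2 := by
  classical
  induction A using Finset.induction_on with
  | empty => exact ⟨fun _ => Classical.arbitrary ι, by simp⟩
  | insert a A ha ih =>
    obtain ⟨f, hf⟩ := ih
    let S : ι → E := fun i => ∑ x ∈ A with f x = i, u x
    have S_def : ∀ i, S i = ∑ x ∈ A with f x = i, u x := fun _ => rfl
    have sum_S : ∑ i, S i = ∑ x ∈ A, u x := sum_fiberwise A f u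
    have hcard : (0 : ℝ) < Fintype.card ι := by exact_mod_cast Fintype.card_pos
    obtain ⟨i, -, hi⟩ : ∃ i ∈ univ, inner ℝ (S i) (u a)
        ≤ inner ℝ (∑ x ∈ A, u x) (u a) / Fintype.card ι := by
      apply exists_le_of_sum_le univ_nonempty
      rw [← sum_inner, sum_S, sum_const, card_univ, nsmul_eq_mul, mul_div_cancel₀ _ hcard.ne']
    have norm_sq_class : ∀ j, ‖S j + if j = i then u a else 0‖ ^ 2
        = ‖S j‖ ^ 2 + if j = i then 2 * inner ℝ (S i) (u a) + ‖u a‖ ^ 2 else 0 := by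
      intro j
      split_ifs with hj
      · rw [norm_add_sq_real, hj, add_assoc]
      · simp
    refine ⟨Function.update f a i, ?_⟩
    simp only [sum_filter_insert_update ha, ← S_def, norm_sq_class, sum_add_distrib, sum_ite_eq',
      mem_univ, if_true, sum_insert ha]
    calc ∑ j, ‖S j‖ ^ 2 + (2 * inner ℝ (S i) (u a) + ‖u a‖ ^ 2)
        ≤ (‖∑ x ∈ A, u x‖ ^ 2 / Fintype.card ι + ∑ x ∈ A, ‖u x‖ ^ 2)
          + (2 * (inner ℝ (∑ x ∈ A, u x) (u a) / Fintype.card ι) + ‖u a‖ ^ 2) := by gcongr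
      _ = (‖∑ x ∈ A, u x‖ ^ 2 + 2 * inner ℝ (∑ x ∈ A, u x) (u a)) / Fintype.card ι
          + (‖u a‖ ^ 2 + ∑ x ∈ A, ‖u x‖ ^ 2) := by ring
      _ ≤ ‖u a + ∑ x ∈ A, u x‖ ^ 2 / Fintype.card ι + (‖u a‖ ^ 2 + ∑ x ∈ A, ‖u x‖ ^ 2) := by
        gcongr
        rw [add_comm (u a), norm_add_sq_real]
        exact le_add_of_nonneg_right (sq_nonneg _)

theorem exists_sum_norm_sq_colorClass_sub_average_le (u : α → E) (A : Finset α) :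
    ∃ f : α → ι, ∑ i, ‖∑ x ∈ A with f x = i, u x - (Fintype.card ι : ℝ)⁻¹ • ∑ x ∈ A, u x‖ ^ 2
      ≤ ∑ x ∈ A, ‖u x‖ ^ 2 := by
  obtain ⟨f, hf⟩ := exists_sum_norm_sq_colorClass_le (ι := ι) u A
  have hcard : (Fintype.card ι : ℝ) ≠ 0 := by exact_mod_cast Fintype.card_ne_zero
  refine ⟨f, ?_⟩
  simp only [norm_sub_sq_real, sum_add_distrib, sum_sub_distrib, ← mul_sum, ← sum_inner,
    sum_fiberwise A f u, inner_smul_right, real_inner_self_eq_norm_sq, norm_smul, norm_inv,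
    RCLike.norm_natCast, sum_const, card_univ, nsmul_eq_mul]
  have : ‖∑ x ∈ A, u x‖ ^ 2 / Fintype.card ι
      = 2 * ((Fintype.card ι : ℝ)⁻¹ * ‖∑ x ∈ A, u x‖ ^ 2)
        - Fintype.card ι * ((Fintype.card ι : ℝ)⁻¹ * ‖∑ x ∈ A, u x‖) ^ 2 := by
    field_simp
    ring
  linarith

end BalancedColoring

section EquitableColoring

variable {V ι : Type*} {G : SimpleGraph V} [DecidableRel G.Adj]

/-- The number of neighbours of `v` in `S`. -/
def degreeIn (G : SimpleGraph V) [DecidableRel G.Adj] (S : Finset V) (v : V) : ℕ :=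
  #{u ∈ S | G.Adj v u}

theorem degreeIn_mono {S S' : Finset V} (h : S ⊆ S') (v : V) :
    degreeIn G S v ≤ degreeIn G S' v :=
  card_le_card (filter_subset_filter _ h)

theorem degreeIn_univ [Fintype V] (v : V) : degreeIn G univ v = G.degree v := by
  rw [degreeIn, ← G.card_neighborFinset_eq_degree, G.neighborFinset_eq_filter]

theorem degreeIn_le_degreeIn_sdiff_add_card [DecidableEq V] (S U : Finset V) (v : V) :
    degreeIn G S v ≤ degreeIn G (S \ U) v + #U := by
  refine (card_le_card fun x hx => ?_).trans (card_union_le _ _)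
  simp only [mem_filter, mem_union, mem_sdiff] at hx ⊢
  tauto

theorem degreeIn_filter_mem [DecidableEq ι] (f : V → ι) (W : Finset V) (J : Finset ι) (v : V) :
    degreeIn G {u ∈ W | f u ∈ J} v = ∑ i ∈ J, degreeIn G {u ∈ W | f u = i} v := by
  simp only [degreeIn, filter_filter, and_comm (b := G.Adj v _)]
  simp only [← filter_filter, sum_card_fiberwise_eq_card_filter]

variable [DecidableEq ι]

theorem exists_coloring_sum_sq_degreeIn_le [Fintype V] [Fintype ι] [Nonempty ι] (G : SimpleGraph V)
    [DecidableRel G.Adj] :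
    ∃ f : V → ι, ∑ v, ∑ i, ((degreeIn G {u | f u = i} v : ℝ) - G.degree v / Fintype.card ι) ^ 2
      ≤ ∑ v, (G.degree v : ℝ) := by
  let nbr : V → EuclideanSpace ℝ V := fun x => WithLp.toLp 2 fun v => if G.Adj v x then 1 else 0
  obtain ⟨f, hf⟩ := exists_sum_norm_sq_colorClass_sub_average_le (ι := ι) nbr univ
  have sum_nbr : ∀ (S : Finset V) (v : V), (∑ x ∈ S, nbr x) v = degreeIn G S v := by
    intro S v
    simp [nbr, degreeIn, WithLp.ofLp_sum, Finset.sum_apply]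
  have norm_sq_nbr : ∀ x, ‖nbr x‖ ^ 2 = G.degree x := by
    intro x
    simp [nbr, EuclideanSpace.real_norm_sq_eq, ← degreeIn_univ, degreeIn, G.adj_comm x]
  refine ⟨f, ?_⟩
  rw [sum_comm]
  simpa only [EuclideanSpace.real_norm_sq_eq, norm_sq_nbr, PiLp.sub_apply, PiLp.smul_apply,
    sum_nbr, degreeIn_univ, smul_eq_mul, inv_mul_eq_div] using hf

theorem exists_coloring_card_unbalanced_le [Fintype V] [Fintype ι] [Nonempty ι] (G : SimpleGraph V)
    [DecidableRel G.Adj] {η : ℝ} (hη : 0 ≤ η) :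
    ∃ f : V → ι, #{v | ∃ i, η < |(degreeIn G {u | f u = i} v : ℝ)
      - G.degree v / Fintype.card ι|} * η ^ 2 ≤ ∑ v, (G.degree v : ℝ) := by
  obtain ⟨f, hf⟩ := exists_coloring_sum_sq_degreeIn_le (ι := ι) G
  refine ⟨f, le_trans ?_ hf⟩
  rw [← nsmul_eq_mul]
  refine (card_nsmul_le_sum _ _ _ fun v hv => ?_).trans
    (sum_le_univ_sum_of_nonneg fun v => sum_nonneg fun i _ => sq_nonneg _)
  obtain ⟨i, hi⟩ := (mem_filter.mp hv).2
  calc η ^ 2 ≤ |(degreeIn G {u | f u = i} v : ℝ) - G.degree v / Fintype.card ι| ^ 2 := by gcongr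
    _ = ((degreeIn G {u | f u = i} v : ℝ) - G.degree v / Fintype.card ι) ^ 2 := sq_abs _
    _ ≤ _ := single_le_sum
      (f := fun i => ((degreeIn G {u | f u = i} v : ℝ) - G.degree v / Fintype.card ι) ^ 2)
      (fun _ _ => sq_nonneg _) (mem_univ i)

/-- Every vertex of `W` has between `p` and `q` neighbours in each of the classes into which the
colouring `f` partitions `W`. Vertices outside `W` are the exceptional ones, on which the colours
are irrelevant. -/
def IsEquitable (G : SimpleGraph V) [DecidableRel G.Adj] (f : V → ι) (W : Finset V)
    (p q : ℝ) : Prop :=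
  ∀ v ∈ W, ∀ i, p ≤ degreeIn G {u ∈ W | f u = i} v ∧ degreeIn G {u ∈ W | f u = i} v ≤ q

namespace IsEquitable

variable {f : V → ι} {W : Finset V} {p q : ℝ}

theorem of_abs_degreeIn_sub_le [Fintype V] [DecidableEq V] {D η η' : ℝ}
    (hW : ∀ v ∈ W, ∀ i, |(degreeIn G {u | f u = i} v : ℝ) - D| ≤ η) (hWc : #Wᶜ ≤ η') :
    IsEquitable G f W (D - η - η') (D + η) := by
  intro v hv i
  have hclass := abs_le.mp (hW v hv i)
  have hupper : degreeIn G {u ∈ W | f u = i} v ≤ degreeIn G {u | f u = i} v :=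
    degreeIn_mono (filter_subset_filter _ (subset_univ W)) v
  have hlower : degreeIn G {u | f u = i} v ≤ degreeIn G {u ∈ W | f u = i} v + #Wᶜ := by
    have hsdiff : ({u | f u = i} : Finset V) \ Wᶜ = {u ∈ W | f u = i} := by
      ext u
      simp [and_comm]
    simpa only [hsdiff] using degreeIn_le_degreeIn_sdiff_add_card (G := G) {u | f u = i} Wᶜ v
  rify at hupper hlower
  constructor <;> linarith

theorem card_mul_le_degreeIn (h : IsEquitable G f W p q) (J : Finset ι) {v : V} (hv : v ∈ W) :
    #J * p ≤ degreeIn G {u ∈ W | f u ∈ J} v := by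
  rw [degreeIn_filter_mem, Nat.cast_sum, ← nsmul_eq_mul]
  exact card_nsmul_le_sum _ _ _ fun i _ => (h v hv i).1

variable [Fintype ι]

theorem mul_card_colorClass_le (h : IsEquitable G f W p q) (i : ι) :
    Fintype.card ι * (p * #{u ∈ W | f u = i}) ≤ q * #W := by
  have edges_le : ∀ j, p * #{u ∈ W | f u = i} ≤ q * #{u ∈ W | f u = j} := by
    intro j
    rw [mul_comm p, mul_comm q, ← nsmul_eq_mul, ← nsmul_eq_mul]
    refine card_nsmul_le_card_nsmul G.Adj (fun v hv => (h v (mem_filter.mp hv).1 j).1)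
      fun v hv => ?_
    simpa only [bipartiteBelow, degreeIn, G.adj_comm v] using (h v (mem_filter.mp hv).1 i).2
  calc Fintype.card ι * (p * #{u ∈ W | f u = i}) = ∑ _j : ι, p * #{u ∈ W | f u = i} := by simp
    _ ≤ ∑ j, q * #{u ∈ W | f u = j} := sum_le_sum fun j _ => edges_le j
    _ = q * #W := by
      rw [← mul_sum, card_eq_sum_card_fiberwise (f := f) (s := W) (t := univ) (by simp)]
      push_cast
      rfl

theorem mul_card_filter_mem_le (h : IsEquitable G f W p q) (J : Finset ι) :
    Fintype.card ι * (p * #{u ∈ W | f u ∈ J}) ≤ #J * (q * #W) := by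
  rw [← sum_card_fiberwise_eq_card_filter, Nat.cast_sum, mul_sum, mul_sum, ← nsmul_eq_mul (#J)]
  exact sum_le_card_nsmul _ _ _ fun i _ => h.mul_card_colorClass_le i

end IsEquitable

theorem exists_isEquitable [Fintype V] [DecidableEq V] [Fintype ι] [Nonempty ι] {d : ℕ}
    (hG : G.IsRegularOfDegree d) (hd : 0 < d) {e : ℝ} (he : 0 < e)
    (hlarge : 8 * Fintype.card ι ^ 3 * Fintype.card V ≤ e ^ 3 * d ^ 2) :
    ∃ (f : V → ι) (W : Finset V),
      IsEquitable G f W ((1 - e) * (d / Fintype.card ι)) ((1 + e) * (d / Fintype.card ι)) ∧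
      #Wᶜ ≤ e * (d / Fintype.card ι) := by
  have : (0 : ℝ) < Fintype.card ι := by exact_mod_cast Fintype.card_pos
  set D : ℝ := d / Fintype.card ι with hD
  have hDpos : 0 < D := by positivity
  obtain ⟨f, hf⟩ := exists_coloring_card_unbalanced_le (ι := ι) G (η := e / 2 * D) (by positivity)
  simp only [hG.degree_eq, sum_const, card_univ, nsmul_eq_mul, ← hD] at hf
  set U : Finset V := {v | ∃ i, e / 2 * D < |(degreeIn G {u | f u = i} v : ℝ) - D|}
  have card_U : #U ≤ e / 2 * D := by
    refine le_of_mul_le_mul_right (hf.trans ?_) (show 0 < (e / 2 * D) ^ 2 by positivity)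
    rw [hD, ← sub_nonneg]
    have : e / 2 * (d / Fintype.card ι : ℝ) * (e / 2 * (d / Fintype.card ι)) ^ 2
        - Fintype.card V * d
        = (e ^ 3 * d ^ 2 - 8 * Fintype.card ι ^ 3 * Fintype.card V) * d
          / (8 * Fintype.card ι ^ 3) := by
      field_simp
      ring
    rw [this]
    have := sub_nonneg.mpr hlarge
    positivity
  refine ⟨f, Uᶜ, ?_, ?_⟩
  · have hbal : ∀ v ∈ Uᶜ, ∀ i, |(degreeIn G {u | f u = i} v : ℝ) - D| ≤ e / 2 * D := by
      intro v hv i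
      by_contra! hlt
      exact mem_compl.mp hv (mem_filter.mpr ⟨mem_univ v, i, hlt⟩)
    intro v hv i
    obtain ⟨hlower, hupper⟩ :=
      IsEquitable.of_abs_degreeIn_sub_le hbal (by rwa [compl_compl] : #Uᶜᶜ ≤ e / 2 * D) v hv i
    exact ⟨by linarith, by linarith [mul_pos he hDpos]⟩
  · rw [compl_compl]
    exact card_U.trans (by linarith [mul_pos he hDpos])

end EquitableColoring

section DeficiencyHall

variable {α β : Type*} [Nonempty β]

theorem exists_injOn_of_card_le_card_biUnion [DecidableEq β] (A : Finset α) (N : α → Finset β)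
    (hall : ∀ S ⊆ A, #S ≤ #(S.biUnion N)) :
    ∃ g : α → β, (∀ a ∈ A, g a ∈ N a) ∧ Set.InjOn g A := by
  have hall' : ∀ S : Finset A, #S ≤ #(S.biUnion fun a => N a) := by
    intro S
    have biUnion_eq : S.biUnion (fun a => N a)
        = (S.map (Function.Embedding.subtype _)).biUnion N := by
      ext b
      simp
    rw [biUnion_eq, ← card_map (Function.Embedding.subtype _)]
    exact hall _ fun a ha => property_of_mem_map_subtype S ha
  obtain ⟨h, h_inj, h_mem⟩ := (all_card_le_biUnion_card_iff_exists_injective _).mp hall'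
  classical
  refine ⟨fun a => if ha : a ∈ A then h ⟨a, ha⟩ else Classical.arbitrary β, fun a ha => ?_, ?_⟩
  · simpa [ha] using h_mem ⟨a, ha⟩
  · intro a ha a' ha' h_eq
    rw [mem_coe] at ha ha'
    simpa [ha, ha', h_inj.eq_iff] using h_eq

-- The marriage theorem is applied after giving every `a` the same `k` additional neighbours.
theorem exists_injOn_of_card_le_card_biUnion_add [DecidableEq α] [DecidableEq β] (A : Finset α)
    (N : α → Finset β) (k : ℕ) (hall : ∀ S ⊆ A, #S ≤ #(S.biUnion N) + k) :
    ∃ S ⊆ A, ∃ g : α → β, (∀ a ∈ S, g a ∈ N a) ∧ Set.InjOn g S ∧ #(A \ S) ≤ k := by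
  let N' : α → Finset (β ⊕ Fin k) := fun a => (N a).disjSum univ
  have hall' : ∀ S ⊆ A, #S ≤ #(S.biUnion N') := by
    intro S hSA
    obtain rfl | ⟨a₀, ha₀⟩ := S.eq_empty_or_nonempty
    · simp
    have biUnion_eq : S.biUnion N' = (S.biUnion N).disjSum univ := by
      ext (b | j)
      · simp [N']
      · simpa [N'] using ⟨a₀, ha₀⟩
    rw [biUnion_eq, card_disjSum, card_univ, Fintype.card_fin]
    exact hall S hSA
  obtain ⟨h, h_mem, h_inj⟩ := exists_injOn_of_card_le_card_biUnion A N' hall'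
  let S : Finset α := {a ∈ A | (h a).isLeft}
  have h_eq_inl : ∀ a ∈ S, ∃ b, h a = .inl b := fun a ha =>
    Sum.isLeft_iff.mp (mem_filter.mp ha).2
  refine ⟨S, filter_subset _ _, fun a => (h a).elim id fun _ => Classical.arbitrary β,
    fun a ha => ?_, fun a ha a' ha' h_eq => ?_, ?_⟩
  · obtain ⟨b, hb⟩ := h_eq_inl a ha
    simpa [N', hb] using h_mem a (mem_filter.mp ha).1
  · obtain ⟨b, hb⟩ := h_eq_inl a ha
    obtain ⟨b', hb'⟩ := h_eq_inl a' ha'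
    exact h_inj (mem_filter.mp ha).1 (mem_filter.mp ha').1 (by simp_all)
  · calc #(A \ S) ≤ #((univ : Finset (Fin k)).map Function.Embedding.inr) := by
          refine card_le_card_of_injOn h (fun a ha => ?_) (h_inj.mono (by simp))
          obtain ⟨haA, haS⟩ := mem_sdiff.mp (mem_coe.mp ha)
          obtain ⟨j, hj⟩ := Sum.isRight_iff.mp
            (Sum.not_isLeft.mp fun hleft => haS (mem_filter.mpr ⟨haA, hleft⟩))
          simp [hj]
      _ = k := by simp

theorem exists_injOn_of_le_card_bipartiteAbove [DecidableEq α] {A : Finset α}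
    {B : Finset β} (r : α → β → Prop) [∀ a b, Decidable (r a b)]
    {p q : ℝ} (hq : 0 < q) (hpq : p ≤ q) (hA : ∀ a ∈ A, p ≤ #(B.bipartiteAbove r a))
    (hB : ∀ b ∈ B, #(A.bipartiteBelow r b) ≤ q) :
    ∃ S ⊆ A, ∃ g : α → β, (∀ a ∈ S, g a ∈ B ∧ r a (g a)) ∧ Set.InjOn g S ∧
      q * #(A \ S) ≤ (q - p) * #A := by
  classical
  have hdef : 0 ≤ (q - p) * #A / q := by
    have := sub_nonneg.mpr hpq
    positivity
  have hall : ∀ S ⊆ A,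
      #S ≤ #(S.biUnion fun a => B.bipartiteAbove r a) + ⌊(q - p) * #A / q⌋₊ := by
    intro S hSA
    set N := S.biUnion fun a => B.bipartiteAbove r a
    have edges_le : #S * p ≤ #N * q := by
      rw [← nsmul_eq_mul, ← nsmul_eq_mul]
      refine card_nsmul_le_card_nsmul r (fun a ha => ?_) fun b hb => ?_
      · refine (hA a (hSA ha)).trans (Nat.cast_le.mpr (card_le_card fun b hb => ?_))
        exact mem_filter.mpr ⟨mem_biUnion.mpr ⟨a, ha, hb⟩, (mem_filter.mp hb).2⟩
      · obtain ⟨a, -, hb⟩ := mem_biUnion.mp hb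
        exact (Nat.cast_le.mpr (card_le_card (filter_subset_filter _ hSA))).trans
          (hB b (mem_filter.mp hb).1)
    have card_S_le : (#S : ℝ) ≤ #A := by exact_mod_cast card_le_card hSA
    have : (#S : ℝ) ≤ #N + (q - p) * #A / q := by
      rw [← sub_le_iff_le_add', le_div_iff₀ hq]
      linarith [mul_le_mul_of_nonneg_left card_S_le (sub_nonneg.mpr hpq)]
    rw [add_comm, ← Nat.floor_add_natCast hdef, Nat.le_floor_iff (by positivity)]
    rwa [add_comm]
  obtain ⟨S, hSA, g, hg, g_inj, card_le⟩ := exists_injOn_of_card_le_card_biUnion_add A _ _ hall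
  refine ⟨S, hSA, g, fun a ha => mem_filter.mp (hg a ha), g_inj, ?_⟩
  rw [mul_comm, ← le_div_iff₀ hq]
  exact (Nat.cast_le.mpr card_le).trans (Nat.floor_le hdef)

end DeficiencyHall

section PathFamilies

variable {V : Type*} {G : SimpleGraph V} {P Q : Finset (List V)} {l : List V}

/-- A finite set of pairwise vertex-disjoint paths of `G`, each given by the list of its
vertices. -/
structure IsPathFamily (G : SimpleGraph V) (P : Finset (List V)) : Prop where
  isPathList : ∀ l ∈ P, IsPathList G l
  pairwise_disjoint : (P : Set (List V)).Pairwise List.Disjoint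

namespace IsPathFamily

theorem empty : IsPathFamily G ∅ :=
  ⟨by simp, by simp⟩

theorem subset (hQ : IsPathFamily G Q) (h : P ⊆ Q) : IsPathFamily G P :=
  ⟨fun l hl => hQ.isPathList l (h hl), hQ.pairwise_disjoint.mono (by simpa)⟩

end IsPathFamily

theorem card_insert_erase_le {α : Type*} [DecidableEq α] {s : Finset α} {a : α} (ha : a ∈ s)
    (b : α) : #(insert b (s.erase a)) ≤ #s :=
  (card_insert_le _ _).trans_eq (card_erase_add_one ha)

variable [DecidableEq V]

/-- The set of vertices covered by a set `P` of paths. -/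
def pathVertices (P : Finset (List V)) : Finset V :=
  P.biUnion List.toFinset

theorem mem_pathVertices {v : V} : v ∈ pathVertices P ↔ ∃ l ∈ P, v ∈ l := by
  simp [pathVertices]

theorem pathVertices_insert : pathVertices (insert l P) = l.toFinset ∪ pathVertices P :=
  biUnion_insert

theorem pathVertices_insert_cons_erase (hl : l ∈ P) (v : V) :
    pathVertices (insert (v :: l) (P.erase l)) = insert v (pathVertices P) := by
  rw [pathVertices_insert, List.toFinset_cons, insert_union, ← pathVertices_insert,
    insert_erase hl]

theorem pathVertices_subset (h : P ⊆ Q) : pathVertices P ⊆ pathVertices Q :=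
  biUnion_subset_biUnion_of_subset_left _ h

namespace IsPathFamily

protected theorem insert (hP : IsPathFamily G P) (hl : IsPathList G l)
    (hdisj : ∀ x ∈ l, x ∉ pathVertices P) : IsPathFamily G (insert l P) := by
  refine ⟨fun l' hl' => ?_, ?_⟩
  · obtain rfl | hl' := mem_insert.mp hl'
    exacts [hl, hP.isPathList l' hl']
  · have : Std.Symm (List.Disjoint (α := V)) := ⟨fun _ _ => List.Disjoint.symm⟩
    rw [coe_insert, Set.pairwise_insert_of_symm]
    exact ⟨hP.pairwise_disjoint,
      fun l' hl' _ x hx hx' => hdisj x hx (mem_pathVertices.mpr ⟨l', hl', hx'⟩)⟩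

theorem notMem_pathVertices_erase (hP : IsPathFamily G P) (hl : l ∈ P) {x : V} (hx : x ∈ l) :
    x ∉ pathVertices (P.erase l) := by
  rw [mem_pathVertices]
  rintro ⟨l', hl', hx'⟩
  exact hP.pairwise_disjoint hl (mem_of_mem_erase hl') (ne_of_mem_erase hl').symm hx hx'

theorem insert_cons_erase (hP : IsPathFamily G P) {v w : V} (hl : w :: l ∈ P)
    (hv : v ∉ pathVertices P) (hvw : G.Adj v w) :
    IsPathFamily G (insert (v :: w :: l) (P.erase (w :: l))) := by
  have hpath := hP.isPathList _ hl
  refine (hP.subset (erase_subset _ _)).insert ⟨List.cons_ne_nil _ _, ?_, ?_⟩ ?_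
  · exact List.isChain_cons_cons.mpr ⟨hvw, hpath.2.1⟩
  · exact List.nodup_cons.mpr ⟨fun h => hv (mem_pathVertices.mpr ⟨_, hl, h⟩), hpath.2.2⟩
  · intro x hx
    obtain rfl | hx := List.mem_cons.mp hx
    exacts [fun h => hv (pathVertices_subset (erase_subset _ _) h),
      hP.notMem_pathVertices_erase hl hx]

end IsPathFamily

-- Vertices are added in decreasing order of rank, each at the head of the path starting at its
-- successor.
theorem exists_isPathFamily_of_injOn {β : Type*} [LinearOrder β] (rank : V → β) {S T : Finset V}
    (hST : S ⊆ T) {g : V → V} (hg : ∀ v ∈ S, g v ∈ T) (g_adj : ∀ v ∈ S, G.Adj v (g v))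
    (rank_lt : ∀ v ∈ S, rank v < rank (g v)) (g_inj : Set.InjOn g S) :
    ∃ P, IsPathFamily G P ∧ pathVertices P = T ∧ #P ≤ #(T \ S) ∧
      ∀ w ∈ T, w ∉ S.image g → ∃ l, w :: l ∈ P := by
  induction T using induction_on_min_value rank generalizing S with
  | empty => exact ⟨∅, .empty, by simp [pathVertices], by simp, by simp⟩
  | insert v T hvT rank_min ih =>
    have hS' : S.erase v ⊆ T := by grind
    have g_mem : ∀ x ∈ S, g x ∈ T := fun x hx => by
      have := rank_lt x hx
      have := rank_min x
      grind
    obtain ⟨P, hP, hPT, hcard, hheads⟩ := ih hS' (fun x hx => g_mem x (mem_of_mem_erase hx))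
      (fun x hx => g_adj x (mem_of_mem_erase hx)) (fun x hx => rank_lt x (mem_of_mem_erase hx))
      (g_inj.mono (by simp))
    by_cases hvS : v ∈ S
    · obtain ⟨l, hl⟩ := hheads (g v) (g_mem v hvS) fun h => by
        obtain ⟨x, hx, hxv⟩ := mem_image.mp h
        exact ne_of_mem_erase hx (g_inj (mem_of_mem_erase hx) hvS hxv)
      refine ⟨_, hP.insert_cons_erase hl (hPT ▸ hvT) (g_adj v hvS), ?_, ?_, ?_⟩
      · rw [pathVertices_insert_cons_erase hl, hPT]
      · calc #(insert (v :: g v :: l) (P.erase (g v :: l)))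
            ≤ #P := card_insert_erase_le hl _
          _ ≤ #(T \ S.erase v) := hcard
          _ = #(insert v T \ S) := by congr 1; grind
      · intro w hw hwS
        obtain rfl | hw := mem_insert.mp hw
        · exact ⟨_, mem_insert_self _ _⟩
        · obtain ⟨l', hl'⟩ := hheads w hw fun h => hwS (image_subset_image (erase_subset _ _) h)
          have : w ≠ g v := fun h => hwS (h ▸ mem_image_of_mem g hvS)
          exact ⟨l', mem_insert_of_mem (mem_erase.mpr ⟨by simp [this], hl'⟩)⟩
    · rw [erase_eq_of_notMem hvS] at hcard hheads
      refine ⟨_, hP.insert (l := [v]) ⟨by simp, List.isChain_singleton v, List.nodup_singleton v⟩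
        (by simpa [hPT] using hvT), ?_, ?_, ?_⟩
      · rw [pathVertices_insert, hPT, List.toFinset_cons, List.toFinset_nil, insert_union,
          empty_union]
      · rw [insert_sdiff_of_notMem _ hvS,
          card_insert_of_notMem (s := T \ S) fun h => hvT (mem_sdiff.mp h).1]
        exact (card_insert_le _ _).trans (Nat.add_le_add_right hcard 1)
      · intro w hw hwS
        obtain rfl | hw := mem_insert.mp hw
        · exact ⟨[], mem_insert_self _ _⟩
        · exact (hheads w hw hwS).imp fun l' hl' => mem_insert_of_mem hl'

namespace IsEquitable

variable [DecidableRel G.Adj] {t : ℕ} {f : V → Fin t} {W : Finset V} {p q : ℝ}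

theorem exists_injOn_next_colorClass [Nonempty V] (h : IsEquitable G f W p q) (hq : 0 < q)
    (hpq : p ≤ q) (s : ℕ) :
    ∃ S ⊆ {v ∈ W | s ≤ (f v : ℕ) ∧ (f v : ℕ) + 1 < t}, ∃ g : V → V,
      (∀ v ∈ S, g v ∈ W ∧ G.Adj v (g v) ∧ (f (g v) : ℕ) = f v + 1) ∧ Set.InjOn g S ∧
      q * #({v ∈ W | s ≤ (f v : ℕ) ∧ (f v : ℕ) + 1 < t} \ S) ≤ (q - p) * #W := by
  set A : Finset V := {v ∈ W | s ≤ (f v : ℕ) ∧ (f v : ℕ) + 1 < t} with hA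
  let B : Finset V := {v ∈ W | s < (f v : ℕ)}
  let next : V → V → Prop := fun v u => G.Adj v u ∧ (f u : ℕ) = f v + 1
  have le_above : ∀ v ∈ A, p ≤ #(B.bipartiteAbove next v) := by
    intro v hv
    obtain ⟨hvW, hs, ht⟩ := mem_filter.mp hv
    refine (h v hvW ⟨f v + 1, ht⟩).1.trans (Nat.cast_le.mpr (card_le_card fun u hu => ?_))
    simp only [mem_filter, Fin.ext_iff] at hu
    simp only [bipartiteAbove, B, next, mem_filter]
    grind
  have below_le : ∀ u ∈ B, #(A.bipartiteBelow next u) ≤ q := by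
    intro u hu
    obtain ⟨huW, hs⟩ := mem_filter.mp hu
    refine le_trans (Nat.cast_le.mpr (card_le_card fun v hv => ?_))
      (h u huW ⟨f u - 1, by omega⟩).2
    simp only [bipartiteBelow, hA, next, mem_filter] at hv
    simp only [mem_filter, Fin.ext_iff, G.adj_comm u]
    grind
  obtain ⟨S, hSA, g, hg, g_inj, hdef⟩ :=
    exists_injOn_of_le_card_bipartiteAbove next hq hpq le_above below_le
  refine ⟨S, hSA, g, fun v hv => ⟨(mem_filter.mp (hg v hv).1).1, (hg v hv).2⟩, g_inj,
    hdef.trans ?_⟩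
  have := sub_nonneg.mpr hpq
  gcongr
  exact filter_subset _ _

theorem exists_isPathFamily (h : IsEquitable G f W p q) (hq : 0 < q) (hpq : p ≤ q) (s : ℕ) :
    ∃ P, IsPathFamily G P ∧ pathVertices P = {v ∈ W | s ≤ (f v : ℕ)} ∧
      q * #P ≤ q * #{v ∈ W | (f v : ℕ) + 1 = t} + (q - p) * #W := by
  cases isEmpty_or_nonempty V
  · exact ⟨∅, .empty, Subsingleton.elim _ _, by simp [Subsingleton.elim W ∅]⟩
  obtain ⟨S, hSA, g, hg, g_inj, hdef⟩ := h.exists_injOn_next_colorClass hq hpq s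
  obtain ⟨P, hP, hPT, hcard, -⟩ := exists_isPathFamily_of_injOn (S := S)
    (T := {v ∈ W | s ≤ (f v : ℕ)}) (fun v => (f v : ℕ))
    (by grind) (by grind) (fun v hv => (hg v hv).2.1) (by grind) g_inj
  refine ⟨P, hP, hPT, ?_⟩
  have card_P_le : #P ≤ #{v ∈ W | (f v : ℕ) + 1 = t}
      + #({v ∈ W | s ≤ (f v : ℕ) ∧ (f v : ℕ) + 1 < t} \ S) := by
    refine hcard.trans ((card_le_card fun v hv => ?_).trans (card_union_le _ _))
    grind
  calc q * #P ≤ q * (#{v ∈ W | (f v : ℕ) + 1 = t}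
        + #({v ∈ W | s ≤ (f v : ℕ) ∧ (f v : ℕ) + 1 < t} \ S)) := by
        gcongr
        exact_mod_cast card_P_le
    _ ≤ _ := by
        rw [mul_add]
        gcongr

end IsEquitable

end PathFamilies

section ShortPaths

variable {V : Type*} {G : SimpleGraph V} {δ : ℕ} {a b : V}

theorem dist_getVert_of_length_eq_dist {w : G.Walk a b} (hw : w.length = G.dist a b) {i : ℕ}
    (hi : i ≤ w.length) : G.dist a (w.getVert i) = i := by
  have le_take : G.dist a (w.getVert i) ≤ i := by
    simpa only [SimpleGraph.Walk.take_length, min_eq_left hi] using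
      SimpleGraph.dist_le (w.take i)
  have le_drop : G.dist (w.getVert i) b ≤ w.length - i := by
    simpa only [SimpleGraph.Walk.drop_length] using SimpleGraph.dist_le (w.drop i)
  have := (w.take i).reachable.dist_triangle_left b
  omega

-- On a shortest path, any vertex is adjacent to at most three vertices.
theorem dist_succ_mul_le_of_le_degree [Fintype V] [DecidableRel G.Adj]
    (hdeg : ∀ v, δ ≤ G.degree v) (hab : G.Reachable a b) :
    (G.dist a b + 1) * δ ≤ Fintype.card V * 3 := by
  obtain ⟨w, -, hw⟩ := hab.exists_path_of_dist
  have dist_vert (i : ℕ) (hi : i ∈ range (w.length + 1)) : G.dist a (w.getVert i) = i :=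
    dist_getVert_of_length_eq_dist hw (mem_range_succ_iff.mp hi)
  rw [← hw, ← card_range (w.length + 1), ← card_univ]
  refine card_mul_le_card_mul (fun i x => G.Adj (w.getVert i) x) (fun i _ => ?_) (fun x _ => ?_)
  · rw [bipartiteAbove, ← SimpleGraph.neighborFinset_eq_filter]
    exact hdeg _
  · have subset_three : (range (w.length + 1)).bipartiteBelow (fun i x => G.Adj (w.getVert i) x) x
        ⊆ {G.dist a x - 1, G.dist a x, G.dist a x + 1} := by
      intro i hi
      obtain ⟨hi, hadj⟩ := mem_filter.mp hi
      have to_x := (w.take i).reachable.dist_triangle_left x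
      have from_x := ((w.take i).reachable.trans hadj.reachable).dist_triangle_left (w.getVert i)
      rw [dist_vert i hi, SimpleGraph.dist_eq_one_iff_adj.mpr hadj] at to_x
      rw [dist_vert i hi, SimpleGraph.dist_eq_one_iff_adj.mpr hadj.symm] at from_x
      simp only [mem_insert, mem_singleton]
      omega
    exact (card_le_card subset_three).trans card_le_three

end ShortPaths

section Components

variable {V : Type*} [Fintype V] {G : SimpleGraph V} [DecidableRel G.Adj] {δ : ℕ}

-- The neighbourhoods of two adjacent vertices of a triangle-free graph are disjoint.
theorem two_mul_le_card_connectedComponent [DecidableEq G.ConnectedComponent]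
    (hG : G.CliqueFree 3) (hδ : 0 < δ) (hdeg : ∀ v, δ ≤ G.degree v) (v : V) :
    2 * δ ≤ #{u | G.connectedComponentMk u = G.connectedComponentMk v} := by
  classical
  obtain ⟨w, hvw⟩ := (G.degree_pos_iff_exists_adj v).mp (hδ.trans_le (hdeg v))
  have disj : Disjoint (G.neighborFinset v) (G.neighborFinset w) := by
    rw [disjoint_left]
    intro x hvx hwx
    rw [SimpleGraph.mem_neighborFinset] at hvx hwx
    exact hG {v, w, x} (SimpleGraph.is3Clique_triple_iff.mpr ⟨hvw, hvx, hwx⟩)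
  calc 2 * δ ≤ G.degree v + G.degree w := by
        have := hdeg v
        have := hdeg w
        omega
    _ = #(G.neighborFinset v ∪ G.neighborFinset w) := (card_union_of_disjoint disj).symm
    _ ≤ _ := card_le_card fun u hu => by
        simp only [mem_union, SimpleGraph.mem_neighborFinset] at hu
        simp only [mem_filter, mem_univ, true_and, SimpleGraph.ConnectedComponent.eq]
        exact hu.elim (fun hvu => hvu.symm.reachable)
          (fun hwu => (hvw.reachable.trans hwu.reachable).symm)

theorem exists_ne_reachable_of_card_lt {β : Type*} (hG : G.CliqueFree 3) (hδ : 0 < δ)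
    (hdeg : ∀ v, δ ≤ G.degree v) {X : Finset β} {a : β → V}
    (hX : Fintype.card V < 2 * δ * #X) :
    ∃ x ∈ X, ∃ y ∈ X, x ≠ y ∧ G.Reachable (a x) (a y) := by
  classical
  have card_components : 2 * δ * #(univ.image G.connectedComponentMk) ≤ Fintype.card V :=
    mul_card_image_le_card univ _ fun C hC => by
      obtain ⟨v, -, rfl⟩ := mem_image.mp hC
      exact two_mul_le_card_connectedComponent hG hδ hdeg v
  obtain ⟨x, hx, y, hy, hxy, heq⟩ := exists_ne_map_eq_of_card_lt_of_maps_to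
    (lt_of_mul_lt_mul_left (card_components.trans_lt hX) (Nat.zero_le _))
    (f := fun x => G.connectedComponentMk (a x)) (fun x _ => mem_image_of_mem _ (mem_univ (a x)))
  exact ⟨x, hx, y, hy, hxy, SimpleGraph.ConnectedComponent.eq.mp heq⟩

end Components

section Links

variable {V : Type*} {G : SimpleGraph V} {S : Finset V} {u v : V} {l : List V}

/-- A path of `G` inside `S` whose first vertex is a neighbour of `u` and whose last vertex is a
neighbour of `v`, so that it can be used to join a path ending in `u` to a path starting in `v`. -/
structure IsLink (G : SimpleGraph V) (S : Finset V) (u v : V) (l : List V) : Prop where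
  isPathList : IsPathList G l
  mem : ∀ x ∈ l, x ∈ S
  adj_head : ∀ x ∈ l.head?, G.Adj u x
  adj_getLast : ∀ x ∈ l.getLast?, G.Adj x v

theorem degree_induce [DecidableRel G.Adj] (v : (S : Set V)) :
    (G.induce (S : Set V)).degree v = degreeIn G S v := by
  rw [← SimpleGraph.card_neighborFinset_eq_degree, ← card_map (.subtype (· ∈ (S : Set V)))]
  congr 1
  ext u
  simp [and_comm]

theorem exists_isLink_of_reachable {a b : (S : Set V)} (hua : G.Adj u a) (hbv : G.Adj b v)
    (hab : (G.induce (S : Set V)).Reachable a b) :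
    ∃ l, IsLink G S u v l ∧ l.length = (G.induce (S : Set V)).dist a b + 1 := by
  obtain ⟨w, hw, hlen⟩ := hab.exists_path_of_dist
  refine ⟨w.support.map Subtype.val, ⟨⟨?_, ?_, ?_⟩, ?_, ?_, ?_⟩, ?_⟩
  · exact mt List.map_eq_nil_iff.mp w.support_ne_nil
  · exact (List.isChain_map _).mpr w.isChain_adj_support
  · exact hw.support_nodup.map Subtype.val_injective
  · intro x hx
    obtain ⟨y, -, rfl⟩ := List.mem_map.mp hx
    exact y.2
  · simpa only [List.head?_map, List.head?_eq_some_head w.support_ne_nil, w.head_support,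
      Option.map_some, Option.mem_some_iff, forall_eq'] using hua
  · simpa only [List.getLast?_map, List.getLast?_eq_some_getLast w.support_ne_nil,
      w.getLast_support, Option.map_some, Option.mem_some_iff, forall_eq'] using hbv
  · rw [List.length_map, SimpleGraph.Walk.length_support, hlen]

theorem exists_isLink [DecidableRel G.Adj] {β : Type*} {δ k : ℕ} {X : Finset β}
    {p : β → V} (hG : G.CliqueFree 3) (hdeg : ∀ v ∈ S, δ ≤ degreeIn G S v)
    (hp : ∀ x, ∃ a ∈ S, G.Adj (p x) a) (hS : #S < 2 * δ * k) (hX : k ≤ #X) :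
    ∃ x ∈ X, ∃ y ∈ X, x ≠ y ∧ ∃ l, IsLink G S (p x) (p y) l ∧ l.length ≤ 6 * k := by
  choose a ha hpa using hp
  have hδ : 0 < δ := Nat.pos_of_ne_zero fun h => by simp [h] at hS
  have hdeg' (v : (S : Set V)) : δ ≤ (G.induce (S : Set V)).degree v :=
    (hdeg v v.2).trans_eq (degree_induce v).symm
  have card_S : Fintype.card (S : Set V) = #S := Fintype.card_coe S
  obtain ⟨x, hx, y, hy, hxy, hreach⟩ := exists_ne_reachable_of_card_lt (X := X)
    (a := fun x => (⟨a x, ha x⟩ : (S : Set V))) (hG.comap ⟨.induce G _⟩) hδ hdeg'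
    (card_S.trans_lt (hS.trans_le (Nat.mul_le_mul_left _ hX)))
  obtain ⟨l, hl, hlen⟩ := exists_isLink_of_reachable (hpa x) (hpa y).symm hreach
  refine ⟨x, hx, y, hy, hxy, l, hl, ?_⟩
  have length_mul_le := dist_succ_mul_le_of_le_degree hdeg' hreach
  rw [← hlen, card_S] at length_mul_le
  exact le_of_mul_le_mul_right (by linarith : l.length * δ ≤ 6 * k * δ) hδ

end Links

section Merging

variable {V : Type*} {G : SimpleGraph V} {P : Finset (List V)} {R S : Finset V} {A B l : List V}

theorem IsLink.isPathList_reverse_append_append {hA : A ≠ []} {hB : B ≠ []}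
    (hl : IsLink G S (A.head hA) (B.head hB) l) (pathA : IsPathList G A) (pathB : IsPathList G B)
    (hAS : ∀ x ∈ A, x ∉ S) (hBS : ∀ x ∈ B, x ∉ S) (hAB : A.Disjoint B) :
    IsPathList G (A.reverse ++ (l ++ B)) := by
  refine ⟨by simp [hA], ?_, ?_⟩
  · have chain_lB : (l ++ B).IsChain G.Adj := by
      refine List.isChain_append.mpr ⟨hl.isPathList.2.1, pathB.2.1, fun x hx y hy => ?_⟩
      obtain rfl := Option.mem_unique (List.head?_eq_some_head hB) hy
      exact hl.adj_getLast x hx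
    refine List.isChain_append.mpr
      ⟨List.isChain_reverse.mpr (pathA.2.1.imp fun _ _ h => h.symm), chain_lB, fun x hx y hy => ?_⟩
    rw [List.getLast?_reverse] at hx
    obtain rfl := Option.mem_unique (List.head?_eq_some_head hA) hx
    rw [List.head?_append_of_ne_nil _ hl.isPathList.1] at hy
    exact hl.adj_head y hy
  · refine List.nodup_append'.mpr ⟨List.nodup_reverse.mpr pathA.2.2,
      List.nodup_append'.mpr ⟨hl.isPathList.2.2, pathB.2.2, ?_⟩, ?_⟩
    · exact fun x hxl hxB => hBS x hxB (hl.mem x hxl)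
    · intro x hxA hx
      rw [List.mem_reverse] at hxA
      exact (List.mem_append.mp hx).elim (fun hxl => hAS x hxA (hl.mem x hxl)) (hAB hxA)

variable [DecidableEq V]

theorem IsPathFamily.exists_merge (hP : IsPathFamily G P) (hA : A ∈ P) (hB : B ∈ P) (hAB : A ≠ B)
    (hS : Disjoint S (pathVertices P))
    (hl : IsLink G S (A.head (hP.isPathList A hA).1) (B.head (hP.isPathList B hB).1) l) :
    ∃ P', IsPathFamily G P' ∧ pathVertices P' = pathVertices P ∪ l.toFinset ∧ #P' < #P := by
  have notMem_S {C : List V} (hC : C ∈ P) : ∀ x ∈ C, x ∉ S := fun x hx hxS =>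
    disjoint_left.mp hS hxS (mem_pathVertices.mpr ⟨C, hC, hx⟩)
  have hB' : B ∈ P.erase A := mem_erase.mpr ⟨hAB.symm, hB⟩
  have hrest : (P.erase A).erase B ⊆ P := (erase_subset _ _).trans (erase_subset _ _)
  refine ⟨insert (A.reverse ++ (l ++ B)) ((P.erase A).erase B), ?_, ?_, ?_⟩
  · refine (hP.subset hrest).insert (hl.isPathList_reverse_append_append (hP.isPathList A hA)
      (hP.isPathList B hB) (notMem_S hA) (notMem_S hB) (hP.pairwise_disjoint hA hB hAB)) ?_
    intro x hx hxP
    simp only [List.mem_append, List.mem_reverse] at hx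
    obtain hxA | hxl | hxB := hx
    · exact hP.notMem_pathVertices_erase hA hxA (pathVertices_subset (erase_subset _ _) hxP)
    · exact disjoint_left.mp hS (hl.mem x hxl) (pathVertices_subset hrest hxP)
    · exact (hP.subset (erase_subset A P)).notMem_pathVertices_erase hB' hxB hxP
  · conv_rhs => rw [← insert_erase hA, ← insert_erase hB', pathVertices_insert,
      pathVertices_insert]
    rw [pathVertices_insert, List.toFinset_append, List.toFinset_append, List.toFinset_reverse]
    ac_rfl
  · calc #(insert (A.reverse ++ (l ++ B)) ((P.erase A).erase B))
        ≤ #(P.erase A) := card_insert_erase_le hB' _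
      _ < #P := card_erase_lt_of_mem hA

variable [DecidableRel G.Adj] {δ k m : ℕ}

-- Two of at least `k` paths have first vertices with neighbours in the same component of the
-- part of `R` not used by the paths.
theorem IsPathFamily.exists_card_lt_card (hG : G.CliqueFree 3) (hR : #R < 2 * δ * k)
    (hdegR : ∀ v ∈ R, δ + m ≤ degreeIn G R v) (hP : IsPathFamily G P)
    (hdegP : ∀ v ∈ pathVertices P, δ + m ≤ degreeIn G R v)
    (hm : #(R ∩ pathVertices P) ≤ m) (hkP : k ≤ #P) :
    ∃ P', IsPathFamily G P' ∧ pathVertices P ⊆ pathVertices P' ∧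
      pathVertices P' ⊆ pathVertices P ∪ R ∧
      #(R ∩ pathVertices P') ≤ #(R ∩ pathVertices P) + 6 * k ∧ #P' < #P := by
  let S := R \ pathVertices P
  have hdegS {v : V} (hv : δ + m ≤ degreeIn G R v) : δ ≤ degreeIn G S v := by
    have : degreeIn G R v ≤ degreeIn G S v + #(R ∩ pathVertices P) := by
      simpa only [sdiff_inter_self_left] using
        degreeIn_le_degreeIn_sdiff_add_card R (R ∩ pathVertices P) v
    omega
  have hδ : 0 < δ := Nat.pos_of_ne_zero fun h => by simp [h] at hR
  have exists_adj (C : {C // C ∈ P}) :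
      ∃ a ∈ S, G.Adj (C.1.head (hP.isPathList C.1 C.2).1) a := by
    obtain ⟨a, ha⟩ := card_pos.mp (hδ.trans_le
      (hdegS (hdegP _ (mem_pathVertices.mpr ⟨C, C.2, List.head_mem _⟩))))
    exact ⟨a, mem_filter.mp ha⟩
  obtain ⟨⟨A, hA⟩, -, ⟨B, hB⟩, -, hAB, l, hl, hlen⟩ := exists_isLink hG
    (fun v hv => hdegS (hdegR v (mem_sdiff.mp hv).1)) exists_adj
    ((card_le_card sdiff_subset).trans_lt hR) (hkP.trans_eq card_attach.symm)
  obtain ⟨P', hP', hPP', hcard⟩ := hP.exists_merge hA hB (by simpa using hAB) sdiff_disjoint hl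
  refine ⟨P', hP', hPP' ▸ subset_union_left, ?_, ?_, hcard⟩
  · rw [hPP']
    exact union_subset_union_right fun x hx =>
      (mem_sdiff.mp (hl.mem x (List.mem_toFinset.mp hx))).1
  · rw [hPP', inter_union_distrib_left]
    refine (card_union_le _ _).trans (Nat.add_le_add_left ?_ _)
    exact (card_le_card inter_subset_right).trans (l.toFinset_card_le.trans hlen)

theorem IsPathFamily.exists_card_lt (hG : G.CliqueFree 3) (hR : #R < 2 * δ * k)
    (hdegR : ∀ v ∈ R, δ + m ≤ degreeIn G R v) (hP : IsPathFamily G P)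
    (hdegP : ∀ v ∈ pathVertices P, δ + m ≤ degreeIn G R v)
    (hm : #(R ∩ pathVertices P) + #P * (6 * k) ≤ m) :
    ∃ P', IsPathFamily G P' ∧ pathVertices P ⊆ pathVertices P' ∧ #P' < k := by
  induction hn : #P using Nat.strong_induction_on generalizing P with
  | _ n ih =>
  obtain hPk | hkP := lt_or_ge #P k
  · exact ⟨P, hP, Subset.rfl, hPk⟩
  obtain ⟨P', hP', hsub, hsub_union, hinter, hcard⟩ :=
    hP.exists_card_lt_card hG hR hdegR hdegP (le_of_add_le_left hm) hkP
  have hm' : #(R ∩ pathVertices P') + #P' * (6 * k) ≤ m :=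
    calc #(R ∩ pathVertices P') + #P' * (6 * k)
        ≤ #(R ∩ pathVertices P) + 6 * k + #P' * (6 * k) := by gcongr
      _ = #(R ∩ pathVertices P) + (#P' + 1) * (6 * k) := by ring
      _ ≤ #(R ∩ pathVertices P) + #P * (6 * k) := by gcongr; omega
      _ ≤ m := hm
  obtain ⟨P'', hP'', hsub', hlt⟩ := ih #P' (hn ▸ hcard) hP'
    (fun v hv => (mem_union.mp (hsub_union hv)).elim (hdegP v) (hdegR v)) hm' rfl
  exact ⟨P'', hP'', hsub.trans hsub', hlt⟩

end Merging

section EquitablePaths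

variable {V : Type*} {G : SimpleGraph V} [DecidableRel G.Adj] {s t : ℕ} {f : V → Fin t}
  {W : Finset V} {p q : ℝ}

theorem ceil_add_floor_le {x ε : ℝ} {n : ℕ} (hx : 0 ≤ x) (hε0 : 0 ≤ ε) (hε1 : ε ≤ 1)
    (hxn : x ≤ n) : ⌈(1 - ε) * x⌉₊ + ⌊ε * x⌋₊ ≤ n := by
  have := sub_nonneg.mpr hε1
  rw [← Nat.ceil_add_natCast (by positivity), Nat.ceil_le]
  have := Nat.floor_le (by positivity : 0 ≤ ε * x)
  linarith

namespace IsEquitable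

theorem mul_le_degreeIn_filter_lt (h : IsEquitable G f W p q) (hs : s ≤ t) {v : V} (hv : v ∈ W) :
    s * p ≤ degreeIn G {u ∈ W | (f u : ℕ) < s} v := by
  simpa [Fin.card_filter_val_lt, hs] using
    h.card_mul_le_degreeIn {i : Fin t | (i : ℕ) < s} hv

theorem mul_card_filter_lt_le (h : IsEquitable G f W p q) (hs : s ≤ t) :
    t * (p * #{u ∈ W | (f u : ℕ) < s}) ≤ s * (q * #W) := by
  simpa [Fin.card_filter_val_lt, hs] using
    h.mul_card_filter_mem_le {i : Fin t | (i : ℕ) < s}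

theorem mul_card_filter_lt_le_two_mul (h : IsEquitable G f W p q) (hp : 0 < p) (hqp : q ≤ 2 * p)
    (hs : s ≤ t) : t * (#{u ∈ W | (f u : ℕ) < s} : ℝ) ≤ 2 * s * #W := by
  refine le_of_mul_le_mul_left ?_ hp
  calc p * (t * (#{u ∈ W | (f u : ℕ) < s} : ℝ)) ≤ s * (q * #W) := by
        linarith [h.mul_card_filter_lt_le hs]
    _ ≤ s * (2 * p * #W) := by gcongr
    _ = p * (2 * s * #W) := by ring

theorem card_filter_lt_lt (h : IsEquitable G f W p q) (hp : 0 < p) (hs0 : 0 < s) (hs : s ≤ t)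
    {x : ℝ} (hx : q * #W < x * (t * p)) : #{u ∈ W | (f u : ℕ) < s} < s * x := by
  have ht : 0 < t := hs0.trans_le hs
  refine lt_of_mul_lt_mul_left ?_ (by positivity : 0 ≤ t * p)
  calc t * p * #{u ∈ W | (f u : ℕ) < s} ≤ s * (q * #W) := by
        linarith [h.mul_card_filter_lt_le hs]
    _ < s * (x * (t * p)) := by gcongr
    _ = t * p * (s * x) := by ring

theorem mul_card_filter_add_one_eq_le (h : IsEquitable G f W p q) (hp : 0 < p) (hqp : q ≤ 2 * p)
    (ht : 0 < t) : t * (#{u ∈ W | (f u : ℕ) + 1 = t} : ℝ) ≤ 2 * #W := by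
  have last_class : {u ∈ W | (f u : ℕ) + 1 = t} = {u ∈ W | f u = ⟨t - 1, by omega⟩} :=
    filter_congr fun u _ => by simp only [Fin.ext_iff]; omega
  have class_le := h.mul_card_colorClass_le ⟨t - 1, by omega⟩
  rw [← last_class, Fintype.card_fin] at class_le
  refine le_of_mul_le_mul_left ?_ hp
  calc p * (t * (#{u ∈ W | (f u : ℕ) + 1 = t} : ℝ)) ≤ q * #W := by linarith
    _ ≤ 2 * p * #W := by gcongr
    _ = p * (2 * #W) := by ring

variable [DecidableEq V]

theorem exists_isPathFamily_mul_card_le (h : IsEquitable G f W p q) (hp : 0 < p) (hpq : p ≤ q)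
    (hqp : q ≤ 2 * p) (ht : 0 < t) (htq : (q - p) * t ≤ 2 * q) (s : ℕ) :
    ∃ P, IsPathFamily G P ∧ pathVertices P = {v ∈ W | s ≤ (f v : ℕ)} ∧
      t * (#P : ℝ) ≤ 4 * #W := by
  have hq : 0 < q := hp.trans_le hpq
  obtain ⟨P, hP, hPW, hcard⟩ := h.exists_isPathFamily hq hpq s
  refine ⟨P, hP, hPW, le_of_mul_le_mul_left ?_ hq⟩
  calc q * (t * #P) = t * (q * #P) := by ring
    _ ≤ t * (q * #{v ∈ W | (f v : ℕ) + 1 = t} + (q - p) * #W) := by gcongr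
    _ = q * (t * #{v ∈ W | (f v : ℕ) + 1 = t}) + (q - p) * t * #W := by ring
    _ ≤ q * (2 * #W) + 2 * q * #W :=
        add_le_add (mul_le_mul_of_nonneg_left (h.mul_card_filter_add_one_eq_le hp hqp ht) hq.le)
          (mul_le_mul_of_nonneg_right htq (Nat.cast_nonneg _))
    _ = q * (4 * #W) := by ring

theorem mul_card_compl_le [Fintype V] (h : IsEquitable G f W p q) (hp : 0 < p) (hqp : q ≤ 2 * p)
    (hs : s ≤ t) {T : Finset V} (hT : {v ∈ W | s ≤ (f v : ℕ)} ⊆ T) :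
    t * (#Tᶜ : ℝ) ≤ 2 * s * #W + t * #Wᶜ := by
  have compl_subset : Tᶜ ⊆ {v ∈ W | (f v : ℕ) < s} ∪ Wᶜ := by
    intro v hv
    have hvs := notMem_mono hT (mem_compl.mp hv)
    rw [mem_filter, not_and, not_le] at hvs
    by_cases hvW : v ∈ W
    exacts [mem_union_left _ (mem_filter.mpr ⟨hvW, hvs hvW⟩), mem_union_right _ (mem_compl.mpr hvW)]
  calc t * (#Tᶜ : ℝ) ≤ t * (#{v ∈ W | (f v : ℕ) < s} + #Wᶜ) := by
        gcongr
        exact_mod_cast (card_le_card compl_subset).trans (card_union_le _ _)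
    _ ≤ 2 * s * #W + t * #Wᶜ := by
        rw [mul_add]
        exact add_le_add_left (h.mul_card_filter_lt_le_two_mul hp hqp hs) _

-- The first `s` colour classes are kept as a reservoir, of which a proportion `ε` may be used up
-- while merging the paths through the other classes.
theorem exists_isPathFamily_card_lt [Fintype V] {ε : ℝ} {k : ℕ} (h : IsEquitable G f W p q)
    (hG : G.CliqueFree 3) (hp : 0 < p) (hpq : p ≤ q) (hqp : q ≤ 2 * p) (hs0 : 0 < s) (hs : s ≤ t)
    (htq : (q - p) * t ≤ 2 * q) (hε0 : 0 ≤ ε) (hε1 : ε ≤ 1)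
    (hmerge : 24 * k * #W ≤ t * (ε * (s * p))) (hlink : q * #W < 2 * ((1 - ε) * p) * k * (t * p)) :
    ∃ P, IsPathFamily G P ∧ #P < k ∧ t * (#(pathVertices P)ᶜ : ℝ) ≤ 2 * s * #W + t * #Wᶜ := by
  have ht : 0 < t := hs0.trans_le hs
  obtain ⟨P, hP, hPW, hcard⟩ := h.exists_isPathFamily_mul_card_le hp hpq hqp ht htq s
  let R : Finset V := {v ∈ W | (f v : ℕ) < s}
  let δ := ⌈(1 - ε) * (s * p)⌉₊
  let m := ⌊ε * (s * p)⌋₊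
  have hdeg {v : V} (hv : v ∈ W) : δ + m ≤ degreeIn G R v :=
    ceil_add_floor_le (by positivity) hε0 hε1 (h.mul_le_degreeIn_filter_lt hs hv)
  have card_R : #R < 2 * δ * k := by
    have : (#R : ℝ) < 2 * δ * k :=
      calc (#R : ℝ) < s * (2 * ((1 - ε) * p) * k) := h.card_filter_lt_lt hp hs0 hs hlink
        _ = 2 * ((1 - ε) * (s * p)) * k := by ring
        _ ≤ 2 * δ * k := by
            gcongr
            exact Nat.le_ceil _
    exact_mod_cast this
  have card_mul : #(R ∩ pathVertices P) + #P * (6 * k) ≤ m := by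
    have disj : R ∩ pathVertices P = ∅ := by grind
    rw [disj, card_empty, zero_add]
    refine Nat.le_floor (le_of_mul_le_mul_left ?_ (Nat.cast_pos.mpr ht : (0 : ℝ) < t))
    push_cast
    linarith [mul_le_mul_of_nonneg_left hcard (by positivity : (0 : ℝ) ≤ 6 * k)]
  obtain ⟨P', hP', hsub, hlt⟩ := hP.exists_card_lt hG card_R
    (fun v hv => hdeg (mem_of_mem_filter v hv))
    (fun v hv => hdeg (mem_of_mem_filter v (hPW ▸ hv))) card_mul
  exact ⟨P', hP', hlt, h.mul_card_compl_le hp hqp hs (hPW ▸ hsub)⟩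

end IsEquitable

end EquitablePaths

section Parameters

/-- A choice of parameters for which the argument works in large graphs of density at least `c`:
the graph is coloured with `t` colours up to a relative error `e`, the first `s` colour classes
form the reservoir, and a proportion `ε` of it may be spent on merging the paths until fewer than
`k` are left, which miss a proportion of at most `α` of the vertices. -/
structure IsAdmissible (c α : ℝ) (k : ℕ) (ε e : ℝ) (s t : ℕ) : Prop where
  ε_pos : 0 < ε
  ε_lt_one : ε < 1
  e_pos : 0 < e
  e_le : e ≤ 1 / 4
  e_mul_le : e * t ≤ 1
  s_pos : 0 < s
  s_le : s ≤ t
  s_mul_le : 3 * s ≤ α * t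
  mul_le_s : 32 * k ≤ c * (ε * s)
  lt_mul : 1 + e < c * (2 * (1 - ε) * k * (1 - e) ^ 2)

theorem exists_isAdmissible {c α : ℝ} {k : ℕ} (hc : 0 < c) (hα : 0 < α) (hk : 1 < 2 * c * k) :
    ∃ ε e s t, IsAdmissible c α k ε e s t := by
  have lt_of_ε : ∀ᶠ ε : ℝ in nhds 0, 1 < c * (2 * (1 - ε) * k) :=
    ContinuousAt.eventually_lt (by fun_prop) (by fun_prop) (by linarith)
  obtain ⟨ε, hε0, hε, hε1⟩ := (lt_of_ε.and (eventually_lt_nhds one_pos)).exists_gt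
  obtain ⟨s, hs⟩ := exists_nat_ge (32 * k / (c * ε))
  have hs0 : 0 < s := by
    have : (k : ℝ) ≠ 0 := by rintro h; norm_num [h] at hk
    exact Nat.cast_pos.mp (lt_of_lt_of_le (by positivity) hs)
  obtain ⟨t, ht⟩ := exists_nat_ge (max (s : ℝ) (3 * s / α))
  obtain ⟨hst, hαt⟩ := max_le_iff.mp ht
  have e_mul_lt : ∀ᶠ e : ℝ in nhds 0, e * t < 1 :=
    ContinuousAt.eventually_lt (by fun_prop) (by fun_prop) (by simp)
  have lt_of_e : ∀ᶠ e : ℝ in nhds 0, 1 + e < c * (2 * (1 - ε) * k * (1 - e) ^ 2) :=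
    ContinuousAt.eventually_lt (by fun_prop) (by fun_prop) (by simpa using hε)
  obtain ⟨e, he0, he, het, hlt⟩ :=
    ((eventually_lt_nhds (by norm_num : (0 : ℝ) < 1 / 4)).and (e_mul_lt.and lt_of_e)).exists_gt
  refine ⟨ε, e, s, t, hε0, hε1, he0, he.le, het.le, hs0, by exact_mod_cast hst,
    (div_le_iff₀' hα).mp hαt, ?_, hlt⟩
  rwa [← mul_assoc, ← div_le_iff₀' (by positivity)]

namespace IsAdmissible

variable {c α ε e D n : ℝ} {k s t : ℕ}

theorem one_add_mul_le (h : IsAdmissible c α k ε e s t) (hD : 0 ≤ D) :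
    (1 + e) * D ≤ 2 * ((1 - e) * D) := by
  rw [← mul_assoc]
  gcongr
  linarith [h.e_le]

theorem sub_mul_le (h : IsAdmissible c α k ε e s t) (hD : 0 ≤ D) :
    ((1 + e) * D - (1 - e) * D) * t ≤ 2 * ((1 + e) * D) :=
  calc ((1 + e) * D - (1 - e) * D) * t = 2 * (e * t * D) := by ring
    _ ≤ 2 * ((1 + e) * D) := by
      gcongr
      linarith [h.e_mul_le, h.e_pos]

theorem twenty_four_mul_le (h : IsAdmissible c α k ε e s t) (hD : 0 ≤ D) (hn : 0 ≤ n)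
    (hcD : c * n ≤ t * D) :
    24 * k * n ≤ t * (ε * (s * ((1 - e) * D))) := by
  have hε : 0 < ε := h.ε_pos
  have he : 3 / 4 ≤ 1 - e := by linarith [h.e_le]
  calc 24 * k * n = 3 / 4 * (32 * k * n) := by ring
    _ ≤ 3 / 4 * (c * (ε * s) * n) := by linarith [mul_le_mul_of_nonneg_right h.mul_le_s hn]
    _ = 3 / 4 * (ε * s) * (c * n) := by ring
    _ ≤ 3 / 4 * (ε * s) * (t * D) := by gcongr
    _ ≤ (1 - e) * (ε * s) * (t * D) := by gcongr
    _ = t * (ε * (s * ((1 - e) * D))) := by ring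

theorem one_add_mul_lt (h : IsAdmissible c α k ε e s t) (hD : 0 < D) (hn : 0 < n)
    (hcD : c * n ≤ t * D) :
    (1 + e) * D * n < 2 * ((1 - ε) * ((1 - e) * D)) * k * (t * ((1 - e) * D)) := by
  have hε : 0 < 1 - ε := sub_pos.mpr h.ε_lt_one
  calc (1 + e) * D * n = D * n * (1 + e) := by ring
    _ < D * n * (c * (2 * (1 - ε) * k * (1 - e) ^ 2)) := by
        gcongr
        exact h.lt_mul
    _ = c * n * (D * (2 * (1 - ε) * k * (1 - e) ^ 2)) := by ring
    _ ≤ t * D * (D * (2 * (1 - ε) * k * (1 - e) ^ 2)) := by gcongr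
    _ = 2 * ((1 - ε) * ((1 - e) * D)) * k * (t * ((1 - e) * D)) := by ring

variable {V : Type*} [Fintype V] [DecidableEq V] {G : SimpleGraph V} [DecidableRel G.Adj]

theorem exists_isPathFamily_of_isEquitable (h : IsAdmissible c α k ε e s t) (hG : G.CliqueFree 3)
    {f : V → Fin t} {W : Finset V} (hf : IsEquitable G f W ((1 - e) * D) ((1 + e) * D))
    (hWc : #Wᶜ ≤ e * D) (hD : 0 < D) (hV : 0 < (Fintype.card V : ℝ))
    (hcD : c * Fintype.card V ≤ t * D) (hDV : t * D ≤ Fintype.card V) :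
    ∃ P, IsPathFamily G P ∧ #P < k ∧ (#(pathVertices P)ᶜ : ℝ) ≤ α * Fintype.card V := by
  have he0 : 0 < e := h.e_pos
  have he : e ≤ 1 / 4 := h.e_le
  have hW : (#W : ℝ) ≤ Fintype.card V := Nat.cast_le.mpr W.card_le_univ
  have hs : (1 : ℝ) ≤ s := Nat.one_le_cast.mpr h.s_pos
  have ht : (0 : ℝ) < t := Nat.cast_pos.mpr (h.s_pos.trans_le h.s_le)
  have hp : 0 < (1 - e) * D := mul_pos (by linarith) hD
  have hpq : (1 - e) * D ≤ (1 + e) * D := by gcongr; linarith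
  have hmerge : 24 * k * (#W : ℝ) ≤ t * (ε * (s * ((1 - e) * D))) :=
    (by gcongr : 24 * k * (#W : ℝ) ≤ _).trans (h.twenty_four_mul_le hD.le hV.le hcD)
  have hlink : (1 + e) * D * #W < 2 * ((1 - ε) * ((1 - e) * D)) * k * (t * ((1 - e) * D)) :=
    (by gcongr : (1 + e) * D * (#W : ℝ) ≤ _).trans_lt (h.one_add_mul_lt hD hV hcD)
  obtain ⟨P, hP, hcard, huncovered⟩ := hf.exists_isPathFamily_card_lt hG hp hpq
    (h.one_add_mul_le hD.le) h.s_pos h.s_le (h.sub_mul_le hD.le) h.ε_pos.le h.ε_lt_one.le hmerge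
    hlink
  refine ⟨P, hP, hcard, le_of_mul_le_mul_left ?_ ht⟩
  have exceptional_le : t * (#Wᶜ : ℝ) ≤ s * Fintype.card V :=
    calc t * (#Wᶜ : ℝ) ≤ t * (e * D) := by gcongr
      _ = e * (t * D) := by ring
      _ ≤ s * Fintype.card V := by gcongr; linarith
  calc t * (#(pathVertices P)ᶜ : ℝ) ≤ 2 * s * #W + t * #Wᶜ := huncovered
    _ ≤ 2 * s * Fintype.card V + s * Fintype.card V :=
        add_le_add (by gcongr) exceptional_le
    _ = 3 * s * Fintype.card V := by ring
    _ ≤ α * t * Fintype.card V := mul_le_mul_of_nonneg_right h.s_mul_le hV.le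
    _ = t * (α * Fintype.card V) := by ring

theorem exists_isPathFamily (h : IsAdmissible c α k ε e s t) {d : ℕ} (hc : 0 < c)
    (hG : G.IsRegularOfDegree d) (hG3 : G.CliqueFree 3) (hd : c * Fintype.card V ≤ d)
    (hlarge : 8 * t ^ 3 ≤ e ^ 3 * c ^ 2 * Fintype.card V) :
    ∃ P, IsPathFamily G P ∧ #P < k ∧ (#(pathVertices P)ᶜ : ℝ) ≤ α * Fintype.card V := by
  have ht : 0 < t := h.s_pos.trans_le h.s_le
  have he : 0 < e := h.e_pos
  have hV : 0 < (Fintype.card V : ℝ) :=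
    pos_of_mul_pos_right ((by positivity : (0 : ℝ) < 8 * t ^ 3).trans_le hlarge) (by positivity)
  have hd0 : 0 < (d : ℝ) := (mul_pos hc hV).trans_le hd
  have hdV : d ≤ Fintype.card V := by
    have : Nonempty V := Fintype.card_pos_iff.mp (Nat.cast_pos.mp hV)
    exact (hG (Classical.arbitrary V)).symm.trans_le (G.degree_lt_card_verts _).le
  have : Nonempty (Fin t) := ⟨⟨0, ht⟩⟩
  obtain ⟨f, W, hf, hWc⟩ := exists_isEquitable (ι := Fin t) hG (Nat.cast_pos.mp hd0) he <| by
    rw [Fintype.card_fin]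
    calc 8 * t ^ 3 * (Fintype.card V : ℝ)
        ≤ e ^ 3 * c ^ 2 * Fintype.card V * Fintype.card V := by gcongr
      _ = e ^ 3 * (c * Fintype.card V) ^ 2 := by ring
      _ ≤ e ^ 3 * d ^ 2 := by gcongr
  rw [Fintype.card_fin] at hf hWc
  have mul_div : (t : ℝ) * (d / t) = d := mul_div_cancel₀ _ (by positivity)
  exact h.exists_isPathFamily_of_isEquitable hG3 hf hWc (by positivity) hV
    (hd.trans_eq mul_div.symm) (mul_div.trans_le (Nat.cast_le.mpr hdV))

end IsAdmissible

end Parameters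

theorem stmt_17_general (c α : ℝ) (hc0 : 0 < c) (hα : 0 < α) :
    ∃ n₀ : ℕ, ∀ (V : Type*) [Fintype V] [DecidableEq V] (G : SimpleGraph V) [DecidableRel G.Adj]
      (d : ℕ), n₀ ≤ Fintype.card V → c * Fintype.card V ≤ d → G.IsRegularOfDegree d →
        G.CliqueFree 3 →
        ∃ P : Finset (List V),
          (∀ l ∈ P, IsPathList G l) ∧
          (∀ l ∈ P, ∀ l' ∈ P, l ≠ l' → ∀ v, v ∈ l → v ∉ l') ∧
          P.card ≤ ⌊1 / (2 * c)⌋₊ ∧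
          ((Finset.univ.filter (fun v : V => ∀ l ∈ P, v ∉ l)).card : ℝ)
            ≤ α * Fintype.card V := by
  have hk : 1 < 2 * c * (⌊1 / (2 * c)⌋₊ + 1 : ℕ) := by
    rw [mul_comm, ← div_lt_iff₀ (by positivity)]
    exact_mod_cast Nat.lt_floor_add_one _
  obtain ⟨ε, e, s, t, h⟩ := exists_isAdmissible hc0 hα hk
  have he : 0 < e := h.e_pos
  refine ⟨⌈8 * t ^ 3 / (e ^ 3 * c ^ 2)⌉₊, fun V _ _ G _ d hn hd hreg hG => ?_⟩
  obtain ⟨P, hP, hcard, huncovered⟩ := h.exists_isPathFamily hc0 hreg hG hd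
    ((div_le_iff₀' (by positivity)).mp (Nat.ceil_le.mp hn))
  refine ⟨P, hP.isPathList, fun l hl l' hl' hne v hv hv' =>
    hP.pairwise_disjoint hl hl' hne hv hv', Nat.lt_succ_iff.mp hcard, ?_⟩
  convert huncovered using 3
  ext v
  simp [mem_pathVertices]

/-- Theorem 1(2): for `c ∈ (0,1]`, `α > 0` and `n` large, every bipartite
`⌈cn⌉`-regular graph on `n` vertices has at most `⌊1/(2c)⌋` vertex-disjoint paths
covering all but at most `αn` vertices. -/
theorem stmt_17 (c α : ℝ) (hc0 : 0 < c) (hc1 : c ≤ 1) (hα : 0 < α) :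
    ∃ n₀ : ℕ, ∀ n : ℕ, n₀ ≤ n →
      ∀ (V : Type) [Fintype V] [DecidableEq V] (G : SimpleGraph V) [DecidableRel G.Adj],
        Fintype.card V = n → G.IsRegularOfDegree ⌈c * n⌉₊ → G.Colorable 2 →
        ∃ P : Finset (List V),
          (∀ l ∈ P, IsPathList G l) ∧
          (∀ l ∈ P, ∀ l' ∈ P, l ≠ l' → ∀ v, v ∈ l → v ∉ l') ∧
          P.card ≤ ⌊1 / (2 * c)⌋₊ ∧
          ((Finset.univ.filter (fun v : V => ∀ l ∈ P, v ∉ l)).card : ℝ) ≤ α * n := by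
  refine (stmt_17_general c α hc0 hα).imp fun n₀ h n hn V _ _ G _ hV hreg hG => ?_
  subst hV
  exact h V G _ hn (Nat.le_ceil _) hreg (hG.cliqueFree (by norm_num))
end

section
/- For all reals c, α > 0 there exist ε > 0 and an integer C > 0 such that for all sufficiently large n: if G is a graph on n vertices with (1-ε)cn ≤ deg(v) ≤ (1+ε)cn for every vertex v, then G contains at most C vertex-disjoint cycles whose union covers all but at most αn vertices of G. -/
open Finset

/-- A list of vertices forms a cycle in `G`: at least 3 distinct vertices,
consecutive vertices adjacent, and the last vertex adjacent to the first. -/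
def IsCycleList {V : Type*} (G : SimpleGraph V) (l : List V) : Prop :=
  3 ≤ l.length ∧ l.Nodup ∧ l.Chain' G.Adj ∧
    ∀ h : l ≠ [], G.Adj (l.getLast h) (l.head h)

/-!
Szemerédi's regularity lemma splits the vertices into boundedly many parts of almost equal size.
Discarding the edges outside dense regular pairs changes few degrees, so in an almost regular graph
the parts of a set `S` must have almost `#S` neighbours in the reduced graph. Hall's theorem with a
deficiency then gives an injective map `σ` from almost all parts to parts, with each `(U, σ U)`
dense and regular. Using one half of every part for its role as `U` and the other half for its role
as a value of `σ` makes these pairs disjoint. Two large subsets of a regular pair are joined by an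
edge, and this alone lets depth-first search find a path through almost all of the pair, in which an
edge between the first and the last few vertices closes an almost spanning cycle. There are at most
as many cycles as parts.
-/

section Cycles

variable {V : Type*} {G : SimpleGraph V}

theorem exists_isCycleList_isInfix_of_adj {s₁ s₂ s₃ : List V} {a b : V}
    (hchain : (s₁ ++ s₂ ++ s₃).IsChain G.Adj) (hnodup : (s₁ ++ s₂ ++ s₃).Nodup) (hs₂ : s₂ ≠ [])
    (ha : a ∈ s₁) (hb : b ∈ s₃) (hab : G.Adj a b) :
    ∃ l, IsCycleList G l ∧ l <:+: s₁ ++ s₂ ++ s₃ ∧ s₂.length ≤ l.length := by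
  obtain ⟨p, q, rfl⟩ := List.append_of_mem ha
  obtain ⟨q', r, rfl⟩ := List.append_of_mem hb
  have hinfix : a :: (q ++ s₂ ++ q' ++ [b]) <:+: p ++ a :: q ++ s₂ ++ (q' ++ b :: r) :=
    ⟨p, r, by simp only [List.append_assoc, List.cons_append, List.nil_append]⟩
  have hpos : 0 < s₂.length := List.length_pos_iff.2 hs₂
  refine ⟨_, ⟨?_, hnodup.sublist hinfix.sublist, hchain.infix hinfix, fun _ ↦ ?_⟩, hinfix, ?_⟩
  · grind
  · simpa using hab.symm
  · grind

/-- A family of pairwise vertex-disjoint cycles of `G`, each one listed by its vertices. -/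
def IsDisjointCycleFamily (G : SimpleGraph V) (𝒞 : Finset (List V)) : Prop :=
  (∀ l ∈ 𝒞, IsCycleList G l) ∧ ∀ l ∈ 𝒞, ∀ l' ∈ 𝒞, l ≠ l' → ∀ v, v ∈ l → v ∉ l'

theorem exists_isDisjointCycleFamily_of_pairwiseDisjoint [Fintype V] [DecidableEq V] {ι : Type*}
    {D : Finset ι} {X : ι → Finset V} {q : ℕ} (hX : (D : Set ι).PairwiseDisjoint X)
    (hcycle : ∀ i ∈ D, ∃ l, IsCycleList G l ∧ l.toFinset ⊆ X i ∧ #(X i) ≤ l.length + q) :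
    ∃ 𝒞, IsDisjointCycleFamily G 𝒞 ∧ #𝒞 ≤ #D ∧
      #{v | ∀ l ∈ 𝒞, v ∉ l} + ∑ i ∈ D, #(X i) ≤ Fintype.card V + #D * q := by
  classical
  choose! l hl hlX hlq using hcycle
  have hdisj : (D : Set ι).PairwiseDisjoint fun i ↦ (l i).toFinset := hX.mono_on hlX
  refine ⟨D.image l, ⟨?_, ?_⟩, card_image_le, ?_⟩
  · simpa only [forall_mem_image] using hl
  · simp only [forall_mem_image]
    intro i hi j hj hij v hvi hvj
    have hvj' := disjoint_left.1 (hdisj hi hj (ne_of_apply_ne l hij)) (List.mem_toFinset.2 hvi)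
    exact hvj' (List.mem_toFinset.2 hvj)
  · have huncovered : ({v | ∀ c ∈ D.image l, v ∉ c} : Finset V) =
        (D.biUnion fun i ↦ (l i).toFinset)ᶜ := by
      ext v; simp
    have hcovered : #(D.biUnion fun i ↦ (l i).toFinset) = ∑ i ∈ D, (l i).length := by
      rw [card_biUnion hdisj]
      exact sum_congr rfl fun i hi ↦ List.toFinset_card_of_nodup (hl i hi).2.1
    have hsum : ∑ i ∈ D, #(X i) ≤ ∑ i ∈ D, (l i).length + #D * q := by
      rw [← smul_eq_mul, ← sum_const, ← sum_add_distrib]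
      exact sum_le_sum hlq
    rw [huncovered]
    have := card_compl_add_card (D.biUnion fun i ↦ (l i).toFinset)
    lia

end Cycles

section DepthFirstSearch

variable {V : Type*} {H : SimpleGraph V} {X T U : Finset V} {s : List V} {x u : V}

/-- A stage of a depth-first search of `H` on the vertex set `X`: the stack `s` is a path of `H`
with its current end at the head, `T` consists of the vertices already discarded and `U` of the
vertices not yet visited. -/
structure IsSearchState (H : SimpleGraph V) (X : Finset V) (s : List V) (T U : Finset V) :
    Prop where
  isChain : s.IsChain H.Adj
  nodup : s.Nodup
  mem_iff : ∀ v, v ∈ X ↔ v ∈ s ∨ v ∈ T ∨ v ∈ U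
  disjoint_discarded : ∀ v ∈ s, v ∉ T
  disjoint_unvisited : ∀ v ∈ s, v ∉ U
  disjoint : Disjoint T U
  not_adj : ∀ t ∈ T, ∀ u ∈ U, ¬H.Adj t u

namespace IsSearchState

theorem initial : IsSearchState H X [] ∅ X where
  isChain := .nil
  nodup := .nil
  mem_iff := by simp
  disjoint_discarded := by simp
  disjoint_unvisited := by simp
  disjoint := disjoint_empty_left X
  not_adj := by simp

theorem push [DecidableEq V] (h : IsSearchState H X s T U) (hu : u ∈ U)
    (hchain : (u :: s).IsChain H.Adj) :
    IsSearchState H X (u :: s) T (U.erase u) where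
  isChain := hchain
  nodup := List.nodup_cons.2 ⟨fun hus ↦ h.disjoint_unvisited u hus hu, h.nodup⟩
  mem_iff := by grind [h.mem_iff]
  disjoint_discarded := by grind [h.disjoint_discarded, disjoint_right.1 h.disjoint hu]
  disjoint_unvisited := by grind [h.disjoint_unvisited]
  disjoint := h.disjoint.mono_right (erase_subset u U)
  not_adj t ht w hw := h.not_adj t ht w (mem_of_mem_erase hw)

theorem pop [DecidableEq V] (h : IsSearchState H X (x :: s) T U) (hx : ∀ u ∈ U, ¬H.Adj x u) :
    IsSearchState H X s (insert x T) U where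
  isChain := h.isChain.tail
  nodup := h.nodup.of_cons
  mem_iff := by grind [h.mem_iff]
  disjoint_discarded := by grind [h.disjoint_discarded, h.nodup]
  disjoint_unvisited v hv := h.disjoint_unvisited v (List.mem_cons_of_mem x hv)
  disjoint := disjoint_insert_left.2 ⟨h.disjoint_unvisited x List.mem_cons_self, h.disjoint⟩
  not_adj := forall_mem_insert _ _ _ |>.2 ⟨hx, h.not_adj⟩

theorem exists_next (h : IsSearchState H X s T U) (hU : U.Nonempty) :
    ∃ s' T' U', IsSearchState H X s' T' U' ∧ #T' + #U = #T + #U' + 1 := by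
  classical
  by_cases hpush : ∃ u ∈ U, (u :: s).IsChain H.Adj
  · obtain ⟨u, hu, hchain⟩ := hpush
    exact ⟨_, _, _, h.push hu hchain, by grind⟩
  · cases s with
    | nil =>
      obtain ⟨u, hu⟩ := hU
      exact absurd ⟨u, hu, .singleton u⟩ hpush
    | cons x s =>
      have hx : ∀ u ∈ U, ¬H.Adj x u := fun u hu hxu ↦
        hpush ⟨u, hu, List.isChain_cons_cons.2 ⟨hxu.symm, h.isChain⟩⟩
      refine ⟨_, _, _, h.pop hx, ?_⟩
      rw [card_insert_of_notMem (h.disjoint_discarded x List.mem_cons_self)]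
      lia

-- Every step lowers `#U - #T` by exactly one, so the search passes through equality.
theorem exists_card_eq (H : SimpleGraph V) (X : Finset V) :
    ∃ s T U, IsSearchState H X s T U ∧ #T = #U := by
  suffices ∀ d s T U, IsSearchState H X s T U → #T + d = #U →
      ∃ s T U, IsSearchState H X s T U ∧ #T = #U from
    this #X [] ∅ X initial (by simp)
  intro d
  induction d with
  | zero => exact fun s T U h hcard ↦ ⟨s, T, U, h, hcard⟩
  | succ d ih =>
    intro s T U h hcard
    obtain ⟨s', T', U', h', hstep⟩ := h.exists_next (card_pos.1 (by lia))
    exact ih s' T' U' h' (by lia)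

theorem card_eq_of_subset [DecidableEq V] (h : IsSearchState H X s T U) {A : Finset V}
    (hA : A ⊆ X) :
    #A = #(s.toFinset ∩ A) + #(T ∩ A) + #(U ∩ A) := by
  have hcover : A = s.toFinset ∩ A ∪ T ∩ A ∪ U ∩ A := by
    grind [h.mem_iff, List.mem_toFinset]
  have hsT : Disjoint (s.toFinset ∩ A) (T ∩ A) := by
    grind [disjoint_left, h.disjoint_discarded, List.mem_toFinset]
  have hsTU : Disjoint (s.toFinset ∩ A ∪ T ∩ A) (U ∩ A) := by
    grind [disjoint_left, h.disjoint_unvisited, h.disjoint, List.mem_toFinset]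
  rw [← card_union_of_disjoint hsT, ← card_union_of_disjoint hsTU, ← hcover]

end IsSearchState

end DepthFirstSearch

section BipartiteHoles

variable {V : Type*} {G : SimpleGraph V} {K : ℕ} {A B A' B' : Finset V}

/-- The pair `(A, B)` has no bipartite hole of size `K`: every two subsets of `A` and `B` with at
least `K` vertices each are joined by an edge of `G`. -/
def NoBipartiteHole (G : SimpleGraph V) (K : ℕ) (A B : Finset V) : Prop :=
  ∀ A' ⊆ A, ∀ B' ⊆ B, K ≤ #A' → K ≤ #B' → ∃ a ∈ A', ∃ b ∈ B', G.Adj a b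

theorem NoBipartiteHole.mono (h : NoBipartiteHole G K A B) (hA : A' ⊆ A) (hB : B' ⊆ B) :
    NoBipartiteHole G K A' B' :=
  fun S hS T hT ↦ h S (hS.trans hA) T (hT.trans hB)

theorem NoBipartiteHole.of_isUniform [DecidableRel G.Adj] {ε : ℝ} (h : G.IsUniform ε A B)
    (hdensity : ε ≤ G.edgeDensity A B) (hA : #A * ε ≤ K) (hB : #B * ε ≤ K) :
    NoBipartiteHole G K A B := by
  intro S hS T hT hKS hKT
  by_contra! hnot
  have hzero : G.edgeDensity S T = 0 := by
    have hempty : G.interedges S T = ∅ := by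
      ext ⟨a, b⟩
      simpa [G.mem_interedges_iff] using fun ha ↦ hnot a ha b
    rw [G.edgeDensity_def, hempty, card_empty, Nat.cast_zero, zero_div]
  have habs := h hS hT (hA.trans (mod_cast hKS)) (hB.trans (mod_cast hKT))
  rw [hzero, Rat.cast_zero, zero_sub, abs_neg] at habs
  exact (hdensity.trans (le_abs_self _)).not_gt habs

section Alternating

variable [DecidableEq V] {l : List V}

theorem length_div_two_le_card_inter_left (hAB : Disjoint A B) (hnodup : l.Nodup)
    (hl : l.IsChain (G.between A B).Adj) : l.length / 2 ≤ #(l.toFinset ∩ A) := by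
  have halternate : (l.map fun v ↦ decide (v ∈ A)).IsChain (· ≠ ·) := by
    refine List.isChain_map_of_isChain _ (fun v w hvw ↦ ?_) hl
    have := disjoint_left.1 hAB
    grind [SimpleGraph.between_adj]
  have hcount := halternate.length_div_two_le_count_bool true
  have hcard : #(l.toFinset ∩ A) = (l.map fun v ↦ decide (v ∈ A)).count true := by
    have hfilter : l.toFinset ∩ A = (l.filter (· ∈ A)).toFinset := by ext; simp
    rw [hfilter, List.toFinset_card_of_nodup (hnodup.filter _), List.count_eq_countP,
      List.countP_map, List.countP_eq_length_filter]
    simp [Function.comp_def]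
  simpa [hcard] using hcount

theorem length_div_two_le_card_inter_right (hAB : Disjoint A B) (hnodup : l.Nodup)
    (hl : l.IsChain (G.between A B).Adj) : l.length / 2 ≤ #(l.toFinset ∩ B) :=
  length_div_two_le_card_inter_left hAB.symm hnodup (SimpleGraph.between_comm ▸ hl)

end Alternating

theorem NoBipartiteHole.exists_isChain (h : NoBipartiteHole G K A B) (hAB : Disjoint A B)
    (hcard : #A = #B) :
    ∃ s : List V, s.IsChain (G.between A B).Adj ∧ s.Nodup ∧ (∀ v ∈ s, v ∈ A ∨ v ∈ B) ∧
      2 * #A ≤ s.length + 4 * K := by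
  classical
  obtain ⟨s, T, U, hs, hTU⟩ := IsSearchState.exists_card_eq (G.between A B) (A ∪ B)
  have hsmall : ∀ {A' B' : Finset V}, A' ⊆ A → B' ⊆ B →
      (∀ a ∈ A', ∀ b ∈ B', ¬(G.between A B).Adj a b) → #A' < K ∨ #B' < K := by
    intro A' B' hA' hB' hnot
    by_contra! hlarge
    obtain ⟨a, ha, b, hb, hab⟩ := h A' hA' B' hB' hlarge.1 hlarge.2
    exact hnot a ha b hb (G.between_adj.2 ⟨hab, .inl ⟨hA' ha, hB' hb⟩⟩)
  have hTA : #(T ∩ A) < K ∨ #(U ∩ B) < K :=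
    hsmall inter_subset_right inter_subset_right fun a ha b hb ↦
      hs.not_adj a (mem_of_mem_inter_left ha) b (mem_of_mem_inter_left hb)
  have hTB : #(U ∩ A) < K ∨ #(T ∩ B) < K :=
    hsmall inter_subset_right inter_subset_right fun a ha b hb hab ↦
      hs.not_adj b (mem_of_mem_inter_left hb) a (mem_of_mem_inter_left ha) hab.symm
  have hA := hs.card_eq_of_subset (A := A) subset_union_left
  have hB := hs.card_eq_of_subset (A := B) subset_union_right
  have hsA := length_div_two_le_card_inter_left hAB hs.nodup hs.isChain
  have hsB := length_div_two_le_card_inter_right hAB hs.nodup hs.isChain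
  have hsplit : ∀ W ⊆ A ∪ B, #W = #(W ∩ A) + #(W ∩ B) := fun W hW ↦ by
    rw [← card_union_of_disjoint (hAB.mono inter_subset_right inter_subset_right),
      ← inter_union_distrib_left, inter_eq_left.2 hW]
  have hsV : ∀ v ∈ s, v ∈ A ∨ v ∈ B := fun v hv ↦ mem_union.1 ((hs.mem_iff v).2 (.inl hv))
  have hs_length : s.length = #(s.toFinset ∩ A) + #(s.toFinset ∩ B) := by
    rw [← List.toFinset_card_of_nodup hs.nodup]
    exact hsplit _ fun v hv ↦ mem_union.2 (hsV v (List.mem_toFinset.1 hv))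
  have hT_card := hsplit T fun v hv ↦ (hs.mem_iff v).2 (.inr (.inl hv))
  have hU_card := hsplit U fun v hv ↦ (hs.mem_iff v).2 (.inr (.inr hv))
  exact ⟨s, hs.isChain, hs.nodup, hsV, by lia⟩

theorem NoBipartiteHole.exists_isCycleList [DecidableEq V] (h : NoBipartiteHole G K A B)
    (hAB : Disjoint A B) (hcard : #A = #B) (hK : 4 * K < #A) :
    ∃ l, IsCycleList G l ∧ l.toFinset ⊆ A ∪ B ∧ 2 * #A ≤ l.length + 8 * K := by
  obtain ⟨s, hchain, hnodup, hs, hlength⟩ := h.exists_isChain hAB hcard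
  obtain ⟨s₁, s₂, s₃, rfl, hs₁, hs₃⟩ : ∃ s₁ s₂ s₃, s = s₁ ++ s₂ ++ s₃ ∧
      s₁.length = 2 * K ∧ s₃.length = 2 * K := by
    refine ⟨s.take (2 * K), (s.drop (2 * K)).take (s.length - 4 * K),
      (s.drop (2 * K)).drop (s.length - 4 * K), ?_, by grind, by grind⟩
    rw [List.append_assoc, List.take_append_drop, List.take_append_drop]
  have hA₁ := length_div_two_le_card_inter_left hAB (hnodup.sublist (by simp))
    (hchain.infix ⟨[], s₂ ++ s₃, by simp⟩ : s₁.IsChain _)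
  have hB₃ := length_div_two_le_card_inter_right hAB (hnodup.sublist (by simp))
    (hchain.infix ⟨s₁ ++ s₂, [], by simp⟩ : s₃.IsChain _)
  obtain ⟨a, ha, b, hb, hab⟩ := h (s₁.toFinset ∩ A) inter_subset_right (s₃.toFinset ∩ B)
    inter_subset_right (by lia) (by lia)
  simp only [List.length_append] at hlength
  obtain ⟨l, hl, hinfix, hs₂l⟩ := exists_isCycleList_isInfix_of_adj
    (hchain.imp fun _ _ ↦ (SimpleGraph.between_le ·)) hnodup
    (List.ne_nil_of_length_pos (by lia)) (List.mem_toFinset.1 (mem_of_mem_inter_left ha))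
    (List.mem_toFinset.1 (mem_of_mem_inter_left hb)) hab
  exact ⟨l, hl, fun v hv ↦ mem_union.2 (hs v (hinfix.subset (List.mem_toFinset.1 hv))), by lia⟩

end BipartiteHoles

section Hall

theorem exists_injOn_of_card_le_card_biUnion_add_s18 {ι β : Type*} [DecidableEq β] [Nonempty β]
    {s : Finset ι} {t : ι → Finset β} {r : ℕ} (h : ∀ S ⊆ s, #S ≤ #(S.biUnion t) + r) :
    ∃ D ⊆ s, ∃ σ : ι → β, Set.InjOn σ D ∧ (∀ x ∈ D, σ x ∈ t x) ∧ #s ≤ #D + r := by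
  classical
  -- Hall's theorem applies once `r` dummy elements are added to every `t x`.
  obtain ⟨f, hf, hft⟩ := (all_card_le_biUnion_card_iff_exists_injective
    fun x : s ↦ (t x).disjSum (univ : Finset (Fin r))).1 fun S ↦ by
      obtain rfl | ⟨x, hx⟩ := S.eq_empty_or_nonempty
      · simp
      have hsub : ((S.map (.subtype _)).biUnion t).disjSum (univ : Finset (Fin r)) ⊆
          S.biUnion fun x ↦ (t x).disjSum univ := by
        rintro (y | y) hy
        · simpa using hy
        · simpa using ⟨x, x.2, hx⟩
      calc #S = #(S.map (.subtype _)) := (card_map _).symm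
        _ ≤ #((S.map (.subtype _)).biUnion t) + r := h _ (by intro; simp +contextual)
        _ ≤ _ := by simpa using card_le_card hsub
  obtain ⟨g, hg⟩ : ∃ g : ι → β ⊕ Fin r, ∀ x : s, g x = f x :=
    ⟨fun x ↦ if hx : x ∈ s then f ⟨x, hx⟩ else .inl (Classical.arbitrary β), by simp⟩
  have hg_inj : Set.InjOn g s := fun x hx y hy hxy ↦
    congrArg Subtype.val (hf (a₁ := ⟨x, hx⟩) (a₂ := ⟨y, hy⟩) (by rw [← hg, ← hg, hxy]))
  have hgt : ∀ x ∈ s, g x ∈ (t x).disjSum univ := fun x hx ↦ hg ⟨x, hx⟩ ▸ hft ⟨x, hx⟩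
  choose! σ hσt hσ using fun x (hx : x ∈ s.filter fun x ↦ ∃ y ∈ t x, g x = .inl y) ↦
    (mem_filter.1 hx).2
  refine ⟨_, filter_subset _ _, σ, fun x hx y hy hxy ↦ ?_, hσt, ?_⟩
  · exact hg_inj (mem_filter.1 hx).1 (mem_filter.1 hy).1 (by rw [hσ x hx, hσ y hy, hxy])
  · have hdummy : #{x ∈ s | ¬∃ y ∈ t x, g x = .inl y} ≤
        #((∅ : Finset β).disjSum (univ : Finset (Fin r))) := by
      refine card_le_card_of_injOn g (fun x hx ↦ ?_) (hg_inj.mono (filter_subset _ _))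
      obtain ⟨hxs, hx⟩ := mem_filter.1 hx
      obtain ⟨y, hy, hxy⟩ | ⟨y, -, hxy⟩ := mem_disjSum.1 (hgt x hxs)
      · exact absurd ⟨y, hy, hxy.symm⟩ hx
      · simp [← hxy]
    rw [card_disjSum, card_empty, card_fin] at hdummy
    have := card_filter_add_card_filter_not (s := s) fun x ↦ ∃ y ∈ t x, g x = .inl y
    lia

end Hall

section Assembly

theorem exists_disjoint_subset_card_eq {α : Type*} {U : Finset α} {h : ℕ}
    (hU : 2 * h ≤ #U) :
    ∃ A ⊆ U, ∃ B ⊆ U, Disjoint A B ∧ #A = h ∧ #B = h := by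
  classical
  obtain ⟨A, hAU, hA⟩ := exists_subset_card_eq (show h ≤ #U by lia)
  obtain ⟨B, hBU, hB⟩ := exists_subset_card_eq (s := U \ A) (n := h)
    (by rw [card_sdiff_of_subset hAU]; lia)
  exact ⟨A, hAU, B, hBU.trans sdiff_subset, disjoint_sdiff.mono_right hBU, hA, hB⟩

variable {V : Type*} [Fintype V] [DecidableEq V] {G : SimpleGraph V}

theorem exists_isDisjointCycleFamily_of_noBipartiteHole {𝒬 D : Finset (Finset V)}
    {σ : Finset V → Finset V} {K h : ℕ} (h𝒬 : (𝒬 : Set (Finset V)).PairwiseDisjoint id)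
    (hD : D ⊆ 𝒬) (hσ : Set.InjOn σ D) (hσ𝒬 : ∀ U ∈ D, σ U ∈ 𝒬) (hσU : ∀ U ∈ D, U ≠ σ U)
    (hhole : ∀ U ∈ D, NoBipartiteHole G K U (σ U)) (hK : 4 * K < h)
    (hcard : ∀ U ∈ 𝒬, 2 * h ≤ #U) :
    ∃ 𝒞, IsDisjointCycleFamily G 𝒞 ∧ #𝒞 ≤ #D ∧
      #{v | ∀ l ∈ 𝒞, v ∉ l} + #D * (2 * h) ≤ Fintype.card V + #D * (8 * K) := by
  choose! A hAU B hBU hAB hA hB using fun U hU ↦ exists_disjoint_subset_card_eq (hcard U hU)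
  have hdisj : ∀ U ∈ D, Disjoint (A U) (B (σ U)) := fun U hU ↦
    (h𝒬 (hD hU) (hσ𝒬 U hU) (hσU U hU)).mono (hAU U (hD hU)) (hBU _ (hσ𝒬 U hU))
  have hX_card : ∀ U ∈ D, #(A U ∪ B (σ U)) = 2 * h := fun U hU ↦ by
    rw [card_union_of_disjoint (hdisj U hU), hA U (hD hU), hB _ (hσ𝒬 U hU), two_mul]
  have hX_disj : (D : Set (Finset V)).PairwiseDisjoint fun U ↦ A U ∪ B (σ U) := by
    have hAB' : ∀ U ∈ 𝒬, ∀ W ∈ 𝒬, Disjoint (A U) (B W) := fun U hU W hW ↦ by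
      obtain rfl | hUW := eq_or_ne U W
      · exact hAB U hU
      · exact (h𝒬 hU hW hUW).mono (hAU U hU) (hBU W hW)
    intro U hU W hW hUW
    simp only [Function.onFun, disjoint_union_left, disjoint_union_right]
    exact ⟨⟨(h𝒬 (hD hU) (hD hW) hUW).mono (hAU U (hD hU)) (hAU W (hD hW)),
      (hAB' W (hD hW) _ (hσ𝒬 U hU)).symm⟩, hAB' U (hD hU) _ (hσ𝒬 W hW),
      (h𝒬 (hσ𝒬 U hU) (hσ𝒬 W hW) (hσ.ne hU hW hUW)).mono (hBU _ (hσ𝒬 U hU)) (hBU _ (hσ𝒬 W hW))⟩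
  have hcycle : ∀ U ∈ D, ∃ l, IsCycleList G l ∧ l.toFinset ⊆ A U ∪ B (σ U) ∧
      #(A U ∪ B (σ U)) ≤ l.length + 8 * K := fun U hU ↦ by
    rw [hX_card U hU, ← hA U (hD hU)]
    exact ((hhole U hU).mono (hAU U (hD hU)) (hBU _ (hσ𝒬 U hU))).exists_isCycleList (hdisj U hU)
      (by rw [hA U (hD hU), hB _ (hσ𝒬 U hU)]) (by rwa [hA U (hD hU)])
  simpa only [sum_congr rfl hX_card, sum_const, smul_eq_mul] using
    exists_isDisjointCycleFamily_of_pairwiseDisjoint hX_disj hcycle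

end Assembly

section DegreeCounting

variable {V : Type*} [Fintype V] {G : SimpleGraph V} [DecidableRel G.Adj]

theorem sum_degree_le_sum_degree_of_forall_adj_mem {A B : Finset V}
    (h : ∀ a ∈ A, ∀ b, G.Adj a b → b ∈ B) : ∑ a ∈ A, G.degree a ≤ ∑ b ∈ B, G.degree b :=
  calc ∑ a ∈ A, G.degree a = ∑ a ∈ A, #(B.bipartiteAbove G.Adj a) := sum_congr rfl fun a ha ↦ by
        rw [← G.card_neighborFinset_eq_degree]
        congr 1
        ext b
        simpa [mem_bipartiteAbove] using h a ha b
    _ = ∑ b ∈ B, #(A.bipartiteBelow G.Adj b) := sum_card_bipartiteAbove_eq_sum_card_bipartiteBelow _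
    _ ≤ ∑ b ∈ B, G.degree b := sum_le_sum fun b _ ↦ by
        rw [← G.card_neighborFinset_eq_degree]
        exact card_le_card fun a ha ↦
          (G.mem_neighborFinset _ _).2 ((mem_bipartiteBelow _).1 ha).2.symm

theorem sum_degree_add_two_mul_card_edgeFinset_le {H : SimpleGraph V} [DecidableRel H.Adj]
    (hHG : H ≤ G) (A : Finset V) :
    ∑ a ∈ A, G.degree a + 2 * #H.edgeFinset ≤ ∑ a ∈ A, H.degree a + 2 * #G.edgeFinset := by
  classical
  have hcompl : ∑ a ∈ Aᶜ, H.degree a ≤ ∑ a ∈ Aᶜ, G.degree a :=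
    sum_le_sum fun a _ ↦ SimpleGraph.degree_le_of_le hHG
  rw [← G.sum_degrees_eq_twice_card_edges, ← H.sum_degrees_eq_twice_card_edges,
    ← sum_add_sum_compl A, ← sum_add_sum_compl A]
  lia

variable [DecidableEq V] {P : Finpartition (univ : Finset V)} {S : Finset (Finset V)} {η ε d : ℝ}

open Classical in
/-- The neighbours of the part `U` in the reduced graph of the partition `P`: the other parts
which form an `ε`-uniform pair of density at least `δ` with `U`. -/
noncomputable def reducedNeighbors (G : SimpleGraph V) [DecidableRel G.Adj]
    (P : Finpartition (univ : Finset V)) (ε δ : ℝ) (U : Finset V) : Finset (Finset V) :=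
  {W ∈ P.parts | U ≠ W ∧ G.IsUniform ε U W ∧ δ ≤ G.edgeDensity U W}

theorem sum_degree_biUnion_le [Nonempty V] (hη : 0 < η) (hP : P.IsEquipartition)
    (hPη : P.IsUniform G (η / 8)) (hk : 4 / η ≤ #P.parts) (hS : S ⊆ P.parts) :
    ∑ v ∈ S.biUnion id, (G.degree v : ℝ) ≤
      ∑ v ∈ (S.biUnion (reducedNeighbors G P (η / 8) (η / 4))).biUnion id, (G.degree v : ℝ) +
        2 * η * Fintype.card V ^ 2 := by
  set N := S.biUnion (reducedNeighbors G P (η / 8) (η / 4))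
  set H := G.regularityReduced P (η / 8) (η / 4)
  have hHG : H ≤ G := SimpleGraph.regularityReduced_le
  have hadj : ∀ v ∈ S.biUnion id, ∀ w, H.Adj v w → w ∈ N.biUnion id := by
    intro v hv w hvw
    obtain ⟨U, hUS, hvU⟩ := mem_biUnion.1 hv
    obtain ⟨-, U', hU', W, hW, hvU', hwW, hUW, huniform, hdensity⟩ := hvw
    obtain rfl := P.disjoint.elim (hS hUS) hU' (not_disjoint_iff.2 ⟨v, hvU, hvU'⟩)
    have hWU : W ∈ reducedNeighbors G P (η / 8) (η / 4) U :=
      mem_filter.2 ⟨hW, hUW, huniform, hdensity⟩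
    exact mem_biUnion.2 ⟨W, mem_biUnion.2 ⟨U, hUS, hWU⟩, hwW⟩
  have hloss := sum_degree_add_two_mul_card_edgeFinset_le hHG (S.biUnion id)
  have hcross := sum_degree_le_sum_degree_of_forall_adj_mem hadj
  have hmono : ∑ w ∈ N.biUnion id, H.degree w ≤ ∑ w ∈ N.biUnion id, G.degree w :=
    sum_le_sum fun w _ ↦ SimpleGraph.degree_le_of_le hHG
  have hedges := SimpleGraph.regularityReduced_edges_card_aux hη hP hPη hk
  have htotal : ∑ v ∈ S.biUnion id, (G.degree v : ℝ) + 2 * #H.edgeFinset ≤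
      ∑ v ∈ N.biUnion id, (G.degree v : ℝ) + 2 * #G.edgeFinset := mod_cast by lia
  push_cast at hedges
  linarith

theorem card_biUnion_le_of_degree_bounds (hη : 0 < η) (hε : 0 < ε)
    (hηd : η * Fintype.card V ≤ ε * d)
    (hdeg : ∀ v, (1 - ε) * d ≤ G.degree v ∧ G.degree v ≤ (1 + ε) * d) (hP : P.IsEquipartition)
    (hPη : P.IsUniform G (η / 8)) (hk : 4 / η ≤ #P.parts) (hS : S ⊆ P.parts) :
    (#(S.biUnion id) : ℝ) ≤ #((S.biUnion (reducedNeighbors G P (η / 8) (η / 4))).biUnion id) +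
      4 * ε * Fintype.card V := by
  set A := S.biUnion id
  set B := (S.biUnion (reducedNeighbors G P (η / 8) (η / 4))).biUnion id
  obtain hV | hV := isEmpty_or_nonempty V
  · simp [eq_empty_of_isEmpty]
  have hn : (0 : ℝ) < Fintype.card V := mod_cast Fintype.card_pos
  have hd : 0 < d := pos_of_mul_pos_right ((mul_pos hη hn).trans_le hηd) hε.le
  have hA_lower : #A * ((1 - ε) * d) ≤ ∑ v ∈ A, (G.degree v : ℝ) := by
    simpa using card_nsmul_le_sum A _ _ fun v _ ↦ (hdeg v).1
  have hB_upper : ∑ v ∈ B, (G.degree v : ℝ) ≤ #B * ((1 + ε) * d) := by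
    simpa using sum_le_card_nsmul B _ _ fun v _ ↦ (hdeg v).2
  have hcount := sum_degree_biUnion_le hη hP hPη hk hS
  have hA : (#A : ℝ) ≤ Fintype.card V := mod_cast card_le_univ A
  have hB : (#B : ℝ) ≤ Fintype.card V := mod_cast card_le_univ B
  have hmul : #A * d ≤ (#B + 4 * ε * Fintype.card V) * d := by
    calc #A * d = #A * ((1 - ε) * d) + ε * d * #A := by ring
      _ ≤ #B * ((1 + ε) * d) + 2 * (η * Fintype.card V) * Fintype.card V + ε * d * #A := by linarith
      _ = #B * d + 2 * (η * Fintype.card V) * Fintype.card V + ε * d * (#A + #B) := by ring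
      _ ≤ #B * d + 2 * (ε * d) * Fintype.card V + ε * d * (Fintype.card V + Fintype.card V) := by
        gcongr
      _ = (#B + 4 * ε * Fintype.card V) * d := by ring
  exact le_of_mul_le_mul_right hmul hd

theorem card_le_card_biUnion_reducedNeighbors_add (hη : 0 < η) (hε : 0 < ε)
    (hηd : η * Fintype.card V ≤ ε * d)
    (hdeg : ∀ v, (1 - ε) * d ≤ G.degree v ∧ G.degree v ≤ (1 + ε) * d) (hP : P.IsEquipartition)
    (hPη : P.IsUniform G (η / 8)) (hk : 4 / η ≤ #P.parts)
    (hkn : (#P.parts : ℝ) ≤ ε * Fintype.card V) (hS : S ⊆ P.parts) :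
    (#S : ℝ) ≤ #(S.biUnion (reducedNeighbors G P (η / 8) (η / 4))) + 10 * ε * #P.parts := by
  set N := S.biUnion (reducedNeighbors G P (η / 8) (η / 4))
  have hN : N ⊆ P.parts := biUnion_subset.2 fun U _ ↦ filter_subset _ _
  set k := #P.parts
  set m := Fintype.card V / k
  have hk0 : 0 < k := Nat.cast_pos.1 ((div_pos four_pos hη).trans_le hk)
  have hm : 1 ≤ m := (Nat.one_le_div_iff hk0).2 P.card_parts_le_card
  have hS_card : #S * m ≤ #(S.biUnion id) := by
    rw [card_biUnion (P.disjoint.subset hS), ← smul_eq_mul]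
    exact card_nsmul_le_sum _ _ _ fun U hU ↦ hP.average_le_card_part (hS hU)
  have hN_card : #(N.biUnion id) ≤ #N * (m + 1) :=
    card_biUnion_le_card_mul _ _ _ fun U hU ↦ hP.card_part_le_average_add_one (hN hU)
  have hNk : (#N : ℝ) ≤ k := mod_cast card_le_card hN
  have hcompare := card_biUnion_le_of_degree_bounds hη hε hηd hdeg hP hPη hk hS
  have hn : (Fintype.card V : ℝ) ≤ k * (m + m) := by
    have := Nat.lt_mul_div_succ (Fintype.card V) hk0
    exact_mod_cast this.le.trans (by gcongr)
  have hmul : #S * m ≤ (#N + 10 * ε * k) * m :=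
    calc (#S * m : ℝ) ≤ #(S.biUnion id) := mod_cast hS_card
      _ ≤ #(N.biUnion id) + 4 * ε * Fintype.card V := hcompare
      _ ≤ #N * (m + 1) + 4 * ε * Fintype.card V := by gcongr; exact_mod_cast hN_card
      _ ≤ #N * m + 5 * ε * Fintype.card V := by linarith
      _ ≤ #N * m + 5 * ε * (k * (m + m)) := by gcongr
      _ = (#N + 10 * ε * k) * m := by ring
  exact le_of_mul_le_mul_right hmul (mod_cast hm)

theorem exists_injOn_mem_reducedNeighbors (hη : 0 < η) (hε : 0 < ε)
    (hηd : η * Fintype.card V ≤ ε * d)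
    (hdeg : ∀ v, (1 - ε) * d ≤ G.degree v ∧ G.degree v ≤ (1 + ε) * d) (hP : P.IsEquipartition)
    (hPη : P.IsUniform G (η / 8)) (hk : 4 / η ≤ #P.parts)
    (hkn : (#P.parts : ℝ) ≤ ε * Fintype.card V) :
    ∃ D ⊆ P.parts, ∃ σ : Finset V → Finset V, Set.InjOn σ D ∧
      (∀ U ∈ D, σ U ∈ reducedNeighbors G P (η / 8) (η / 4) U) ∧
      (#P.parts : ℝ) ≤ #D + 10 * ε * #P.parts := by
  have hdeficit : ∀ S ⊆ P.parts, #S ≤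
      #(S.biUnion (reducedNeighbors G P (η / 8) (η / 4))) + ⌊10 * ε * #P.parts⌋₊ := by
    intro S hS
    rw [add_comm, ← Nat.floor_add_natCast (by positivity)]
    refine Nat.le_floor ?_
    rw [add_comm]
    exact card_le_card_biUnion_reducedNeighbors_add hη hε hηd hdeg hP hPη hk hkn hS
  obtain ⟨D, hD, σ, hσ, hσmem, hcard⟩ := exists_injOn_of_card_le_card_biUnion_add_s18 hdeficit
  refine ⟨D, hD, σ, hσ, hσmem, ?_⟩
  calc (#P.parts : ℝ) ≤ #D + ⌊10 * ε * #P.parts⌋₊ := mod_cast hcard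
    _ ≤ #D + 10 * ε * #P.parts := by gcongr; exact Nat.floor_le (by positivity)

end DegreeCounting

section AlmostRegular

variable {V : Type*} [Fintype V] [DecidableEq V] {G : SimpleGraph V} [DecidableRel G.Adj]
  {P : Finpartition (univ : Finset V)} {U W : Finset V} {ε δ η d : ℝ} {K : ℕ}

theorem NoBipartiteHole.of_mem_reducedNeighbors (hP : P.IsEquipartition) (hU : U ∈ P.parts)
    (hW : W ∈ reducedNeighbors G P ε δ U) (hεδ : ε ≤ δ)
    (hK : (↑(Fintype.card V / #P.parts) + 1) * ε ≤ K) : NoBipartiteHole G K U W := by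
  obtain ⟨hWP, -, huniform, hdensity⟩ := mem_filter.1 hW
  have hpart : ∀ X ∈ P.parts, #X * ε ≤ K := fun X hX ↦ by
    refine le_trans ?_ hK
    gcongr
    · exact huniform.pos.le
    · exact_mod_cast hP.card_part_le_average_add_one hX
  exact .of_isUniform huniform (hεδ.trans hdensity) (hpart U hU) (hpart W hWP)

theorem four_mul_ceil_lt_half {m : ℕ} (hm : 100 ≤ m) (hη₀ : 0 ≤ η) (hη : η ≤ 1 / 100) :
    4 * ⌈(m + 1) * (η / 8)⌉₊ < m / 2 := by
  have hceil : (⌈(m + 1) * (η / 8)⌉₊ : ℝ) ≤ (m + 1) * (1 / 800) + 1 :=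
    (Nat.ceil_lt_add_one (by positivity)).le.trans (by gcongr _ * ?_ + _; linarith)
  have hceil' : 800 * ⌈(m + 1) * (η / 8)⌉₊ ≤ m + 801 := by
    rw [← Nat.cast_le (α := ℝ)]
    push_cast
    linarith
  lia

-- Here `n` vertices are split into `k` parts of size about `n / k`, and `D` cycles, one for each
-- matched pair of half-parts, miss `8 * K` vertices of their pair and leave `u` vertices uncovered.
theorem card_uncovered_le {n k D K u : ℕ} (hk : 0 < k) (hDk : D ≤ k)
    (hcount : u + D * (2 * (n / k / 2)) ≤ n + D * (8 * K))
    (hK : (8 * K : ℝ) ≤ (↑(n / k) + 1) * ε + 8) (hε₀ : 0 ≤ ε) (hε : ε ≤ 1)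
    (hD : (k : ℝ) ≤ D + 10 * ε * k) (hkn : (k : ℝ) ≤ ε * n) : (u : ℝ) ≤ 22 * ε * n := by
  set m := n / k
  have hround : (u + D * m : ℝ) ≤ n + D * (8 * K + 1) := by
    have : D * m ≤ D * (2 * (m / 2) + 1) := Nat.mul_le_mul_left _ (by lia)
    have : u + D * m ≤ n + D * (8 * K + 1) := by lia
    exact_mod_cast this
  have hn_lower : (k * m : ℝ) ≤ n := mod_cast Nat.mul_div_le n k
  have hn_upper : (n : ℝ) ≤ k * (m + 1) := mod_cast (Nat.lt_mul_div_succ n hk).le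
  calc (u : ℝ) ≤ n + D * (8 * K + 1) - D * m := by linarith
    _ ≤ k * (m + 1) + k * ((m + 1) * ε + 8 + 1) - D * m := by gcongr
    _ = (k - D) * m + ε * (k * m) + (10 + ε) * k := by ring
    _ ≤ 10 * ε * k * m + ε * (k * m) + 11 * k := by gcongr <;> linarith
    _ = 11 * ε * (k * m) + 11 * k := by ring
    _ ≤ 11 * ε * n + 11 * (ε * n) := by gcongr
    _ = 22 * ε * n := by ring

theorem exists_isDisjointCycleFamily_of_isEquipartition (hη : 0 < η) (hηε : η ≤ ε)
    (hε : ε ≤ 1 / 100) (hηd : η * Fintype.card V ≤ ε * d)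
    (hdeg : ∀ v, (1 - ε) * d ≤ G.degree v ∧ G.degree v ≤ (1 + ε) * d) (hP : P.IsEquipartition)
    (hPη : P.IsUniform G (η / 8)) (hk : 4 / η ≤ #P.parts)
    (hkn : (#P.parts : ℝ) ≤ ε * Fintype.card V) :
    ∃ 𝒞, IsDisjointCycleFamily G 𝒞 ∧ #𝒞 ≤ #P.parts ∧
      (#{v | ∀ l ∈ 𝒞, v ∉ l} : ℝ) ≤ 22 * ε * Fintype.card V := by
  have hε0 : 0 < ε := hη.trans_le hηε
  obtain ⟨D, hD, σ, hσ, hσmem, hDcard⟩ :=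
    exists_injOn_mem_reducedNeighbors hη hε0 hηd hdeg hP hPη hk hkn
  set k := #P.parts
  set n := Fintype.card V
  set m := n / k
  have hk0 : 0 < k := Nat.cast_pos.1 ((div_pos four_pos hη).trans_le hk)
  have hm : 100 ≤ m := by
    rw [Nat.le_div_iff_mul_le hk0]
    have : ε * n ≤ 1 / 100 * n := by gcongr
    have : (100 * k : ℝ) ≤ n := by linarith
    exact_mod_cast this
  set K := ⌈(m + 1) * (η / 8)⌉₊
  have hK : (8 * K : ℝ) ≤ (m + 1) * ε + 8 := by
    have : (K : ℝ) ≤ (m + 1) * (η / 8) + 1 := (Nat.ceil_lt_add_one (by positivity)).le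
    have : (m + 1) * η ≤ (m + 1) * ε := by gcongr
    linarith
  obtain ⟨𝒞, h𝒞, h𝒞card, huncovered⟩ := exists_isDisjointCycleFamily_of_noBipartiteHole (G := G)
    P.disjoint hD hσ (fun U hU ↦ (mem_filter.1 (hσmem U hU)).1)
    (fun U hU ↦ (mem_filter.1 (hσmem U hU)).2.1)
    (fun U hU ↦ .of_mem_reducedNeighbors hP (hD hU) (hσmem U hU) (by linarith)
      (Nat.le_ceil _))
    (four_mul_ceil_lt_half hm hη.le (hηε.trans hε))
    fun U hU ↦ (Nat.mul_div_le m 2).trans (hP.average_le_card_part hU)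
  exact ⟨𝒞, h𝒞, h𝒞card.trans (card_le_card hD),
    card_uncovered_le hk0 (card_le_card hD) huncovered hK hε0.le (by linarith) hDcard hkn⟩

theorem exists_isDisjointCycleFamily_of_degree_bounds (hη : 0 < η) (hηε : η ≤ ε)
    (hε : ε ≤ 1 / 100) (hηd : η * Fintype.card V ≤ ε * d)
    (hdeg : ∀ v, (1 - ε) * d ≤ G.degree v ∧ G.degree v ≤ (1 + ε) * d)
    (hn : (SzemerediRegularity.bound (η / 8) ⌈4 / η⌉₊ : ℝ) ≤ ε * Fintype.card V) :
    ∃ 𝒞, IsDisjointCycleFamily G 𝒞 ∧ #𝒞 ≤ SzemerediRegularity.bound (η / 8) ⌈4 / η⌉₊ ∧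
      (#{v | ∀ l ∈ 𝒞, v ∉ l} : ℝ) ≤ 22 * ε * Fintype.card V := by
  have hcard : SzemerediRegularity.bound (η / 8) ⌈4 / η⌉₊ ≤ Fintype.card V := by
    rw [← Nat.cast_le (α := ℝ)]
    exact hn.trans (mul_le_of_le_one_left (by positivity) (by linarith))
  obtain ⟨P, hP, hk, hkM, hPη⟩ := szemeredi_regularity G (ε := η / 8) (by positivity)
    ((SzemerediRegularity.le_bound (η / 8) _).trans hcard)
  obtain ⟨𝒞, h𝒞, h𝒞card, huncovered⟩ := exists_isDisjointCycleFamily_of_isEquipartition hη hηε hε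
    hηd hdeg hP hPη (Nat.ceil_le.1 hk) ((Nat.cast_le.2 hkM).trans hn)
  exact ⟨𝒞, h𝒞, h𝒞card.trans hkM, huncovered⟩

end AlmostRegular

/-- Theorem 2: for all `c, α > 0` there exist `ε > 0` and `C ∈ ℕ` such that for all
large `n`, every `n`-vertex graph with all degrees `(1±ε)cn` contains at most `C`
vertex-disjoint cycles covering all but at most `αn` vertices. -/
theorem stmt_18 (c α : ℝ) (hc : 0 < c) (hα : 0 < α) :
    ∃ (ε : ℝ) (C : ℕ), 0 < ε ∧ 0 < C ∧
      ∃ n₀ : ℕ, ∀ n : ℕ, n₀ ≤ n →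
        ∀ (V : Type) [Fintype V] [DecidableEq V] (G : SimpleGraph V) [DecidableRel G.Adj],
          Fintype.card V = n →
          (∀ v : V, (1 - ε) * c * n ≤ (G.degree v : ℝ) ∧ (G.degree v : ℝ) ≤ (1 + ε) * c * n) →
          ∃ 𝒞 : Finset (List V),
            (∀ l ∈ 𝒞, IsCycleList G l) ∧
            (∀ l ∈ 𝒞, ∀ l' ∈ 𝒞, l ≠ l' → ∀ v, v ∈ l → v ∉ l') ∧
            𝒞.card ≤ C ∧
            ((Finset.univ.filter (fun v : V => ∀ l ∈ 𝒞, v ∉ l)).card : ℝ) ≤ α * n := by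
  let ε := min α 1 / 100
  let η := ε * min c 1
  let M := SzemerediRegularity.bound (η / 8) ⌈4 / η⌉₊
  have hε : 0 < ε := by positivity
  have hη : 0 < η := by positivity
  have hηε : η ≤ ε := mul_le_of_le_one_right hε.le (min_le_right c 1)
  have hε_le : ε ≤ 1 / 100 := by dsimp only [ε]; gcongr; exact min_le_right α 1
  have hεα : 22 * ε ≤ α := by dsimp only [ε]; linarith [min_le_left α 1]
  refine ⟨ε, M, hε, SzemerediRegularity.bound_pos _ _, ⌈M / ε⌉₊, ?_⟩
  rintro _ hn V _ _ G _ rfl hdeg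
  have hM : (M : ℝ) ≤ ε * Fintype.card V := (div_le_iff₀' hε).1 (Nat.ceil_le.1 hn)
  have hηd : η * Fintype.card V ≤ ε * (c * Fintype.card V) :=
    (mul_assoc ε _ _).trans_le (by gcongr; exact min_le_left c 1)
  obtain ⟨𝒞, ⟨hcycle, hdisj⟩, hcard, huncovered⟩ :=
    exists_isDisjointCycleFamily_of_degree_bounds hη hηε hε_le hηd
      (by simpa only [mul_assoc] using hdeg) hM
  exact ⟨𝒞, hcycle, hdisj, hcard, huncovered.trans (by gcongr)⟩
end
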